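/- Let H be a finite simple graph with maximum degree Δ(H) ≥ 6 and clique number ω(H) ≤ Δ(H) − 1. Let k ≥ 1 and let p_1 ≥ p_2 ≥ … ≥ p_k ≥ 2 be positive integers with p_1 ≥ 4 and p_1 + p_2 + … + p_k = Δ(H) − 1 + k. Then there exists a partition of V(H) into sets V_1, V_2, …, V_k such that for each 1 ≤ i ≤ k the induced subgraph H[V_i] is K_{p_i}-free. -/

import Mathlib

namespace BK
open Finset Classical

/-- neighbourhood as a finset -/
noncomputable def nb {V : Type*} [Fintype V] (G : SimpleGraph V) (v : V) : Finset V :=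
  Finset.univ.filter (fun w => G.Adj v w)

lemma mem_nb {V : Type*} [Fintype V] {G : SimpleGraph V} {v w : V} :
    w ∈ nb G v ↔ G.Adj v w := by simp [nb]

/-- independent transversal of the classes indexed by `S` -/
def IT {V ι : Type*} (G : SimpleGraph V) (P : ι → Finset V) (S : Finset ι) : Prop :=
  ∃ f : ι → V, (∀ i ∈ S, f i ∈ P i) ∧ ∀ i ∈ S, ∀ j ∈ S, i ≠ j → ¬ G.Adj (f i) (f j)

theorem haxell_dom {V ι : Type*} [Fintype V] (n : ℕ) :
    ∀ (G : SimpleGraph V) (P : ι → Finset V) (S : Finset ι) (A : ι),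
      S.card + G.edgeFinset.card ≤ n →
      (∀ i ∈ S, ∀ j ∈ S, i ≠ j → Disjoint (P i) (P j)) → A ∈ S →
      IT G P (S.erase A) → ¬ IT G P S →
      ∃ S' ⊆ S, A ∈ S' ∧ ∃ D : Finset V, D.card + 2 ≤ 2 * S'.card ∧
        (∀ d ∈ D, ∃ i ∈ S', d ∈ P i) ∧
        (∀ i ∈ S', ∀ v ∈ P i, ∃ d ∈ D, G.Adj v d) ∧
        (2 ≤ S'.card → ∀ i ∈ S', ∃ d ∈ D, d ∈ P i) := by
  induction n with
  | zero =>
    intro G P S A hc _ hA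
    have := Finset.card_pos.2 ⟨A, hA⟩
    omega
  | succ n ih =>
    intro G P S A hc hdis hA hT hno
    rcases (P A).eq_empty_or_nonempty with hPA | ⟨a, ha⟩
    · refine ⟨{A}, by simpa using hA, by simp, ∅, by simp, by simp, ?_, by simp⟩
      intro i hi v hv
      simp at hi
      subst hi
      simp [hPA] at hv
    obtain ⟨f, hf1, hf2⟩ := hT
    -- an edge from a to some f j
    have hex : ∃ j ∈ S, j ≠ A ∧ G.Adj a (f j) := by
      by_contra hcon
      push Not at hcon
      apply hno
      refine ⟨Function.update f A a, ?_, ?_⟩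
      · intro i hi
        by_cases h : i = A
        · subst h; simpa using ha
        · simpa [h] using hf1 i (by simp [h, hi])
      · intro i hi j hj hij
        by_cases h : i = A
        · subst h
          have hj' : j ≠ i := fun h => hij h.symm
          simpa [hj'] using hcon j hj hj'
        · by_cases h' : j = A
          · subst h'
            have := hcon i hi h
            simp only [Function.update_self, Function.update_of_ne h]
            exact fun hh => this hh.symm
          · simpa [h, h'] using hf2 i (by simp [h, hi]) j (by simp [h', hj]) hij
    obtain ⟨B, hB, hBA, hab⟩ := hex
    set b := f B with hb
    have hbP : b ∈ P B := hf1 B (by simp [hBA, hB])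
    have hne : a ≠ b := hab.ne
    let G1 := G.deleteEdges {s(a,b)}
    have hG1 : ∀ x y, G1.Adj x y ↔ G.Adj x y ∧ s(x,y) ≠ s(a,b) := by
      intro x y; simp [G1, SimpleGraph.deleteEdges_adj]
    have hG1le : ∀ x y, G1.Adj x y → G.Adj x y := fun x y h => ((hG1 x y).1 h).1
    by_cases hG1T : IT G1 P S
    · -- critical case
      obtain ⟨g, hg1, hg2⟩ := hG1T
      have hcls : ∀ i ∈ S, ∀ j ∈ S, ∀ x, x ∈ P i → x ∈ P j → i = j := by
        intro i hi j hj x hx hy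
        by_contra hij
        exact Finset.disjoint_left.1 (hdis i hi j hj hij) hx hy
      have hgab : g A = a ∧ g B = b := by
        by_contra hcon
        apply hno
        refine ⟨g, hg1, ?_⟩
        intro i hi j hj hij hadj
        have h1 := hg2 i hi j hj hij
        rw [hG1] at h1
        push Not at h1
        have h2 := h1 hadj
        rw [Sym2.eq_iff] at h2
        apply hcon
        rcases h2 with ⟨h3, h4⟩ | ⟨h3, h4⟩
        · have e1 := hcls i hi A hA a (h3 ▸ hg1 i hi) ha
          have e2 := hcls j hj B hB b (h4 ▸ hg1 j hj) hbP
          subst e1 e2; exact ⟨h3, h4⟩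
        · have e1 := hcls i hi B hB b (h3 ▸ hg1 i hi) hbP
          have e2 := hcls j hj A hA a (h4 ▸ hg1 j hj) ha
          subst e1 e2; exact ⟨h4, h3⟩
      let P1 : ι → Finset V := fun i =>
        if i = A then (P A ∪ P B) \ (nb G a ∪ nb G b) else P i \ (nb G a ∪ nb G b)
      have hP1A : P1 A = (P A ∪ P B) \ (nb G a ∪ nb G b) := by simp [P1]
      have hP1 : ∀ i, i ≠ A → P1 i = P i \ (nb G a ∪ nb G b) := by
        intro i hi; simp [P1, hi]
      have hP1na : ∀ i, ∀ v ∈ P1 i, ¬ G.Adj a v ∧ ¬ G.Adj b v := by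
        intro i v hv
        by_cases h : i = A
        · subst h; rw [hP1A] at hv; simp [mem_nb] at hv; tauto
        · rw [hP1 i h] at hv; simp [mem_nb] at hv; tauto
      have hP1d : ∀ i ∈ S.erase B, ∀ j ∈ S.erase B, i ≠ j → Disjoint (P1 i) (P1 j) := by
        have key : ∀ j ∈ S.erase B, A ≠ j → Disjoint (P1 A) (P1 j) := by
          intro j hj hAj
          rw [hP1A, hP1 j hAj.symm, Finset.disjoint_left]
          intro x hx hx'
          simp only [Finset.mem_sdiff, Finset.mem_union, Finset.mem_erase] at hx hx' hj
          rcases hx.1 with h | h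
          · exact hAj (hcls A hA j hj.2 x h hx'.1)
          · exact hj.1 (hcls B hB j hj.2 x h hx'.1).symm
        intro i hi j hj hij
        by_cases h : i = A
        · subst h; exact key j hj hij
        · by_cases h' : j = A
          · subst h'; exact (key i hi hij.symm).symm
          · rw [hP1 i h, hP1 j h']
            exact Disjoint.mono Finset.sdiff_subset Finset.sdiff_subset
              (hdis i (Finset.mem_of_mem_erase hi) j (Finset.mem_of_mem_erase hj) hij)
      have hIT1 : IT G P1 ((S.erase B).erase A) := by
        refine ⟨g, ?_, ?_⟩
        · intro i hi
          simp only [Finset.mem_erase] at hi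
          rw [hP1 i hi.1]
          simp only [Finset.mem_sdiff, Finset.mem_union, mem_nb, not_or]
          refine ⟨hg1 i hi.2.2, ?_, ?_⟩
          · intro hadj
            have h1 := hg2 A hA i hi.2.2 (Ne.symm hi.1)
            rw [hG1, hgab.1] at h1
            push Not at h1
            have h2 := h1 hadj
            rw [Sym2.eq_iff] at h2
            rcases h2 with ⟨_, h4⟩ | ⟨h3, _⟩
            · exact hi.2.1 (hcls i hi.2.2 B hB b (h4 ▸ hg1 i hi.2.2) hbP)
            · exact hne h3
          · intro hadj
            have h1 := hg2 B hB i hi.2.2 (Ne.symm hi.2.1)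
            rw [hG1, hgab.2] at h1
            push Not at h1
            have h2 := h1 hadj
            rw [Sym2.eq_iff] at h2
            rcases h2 with ⟨h3, _⟩ | ⟨_, h4⟩
            · exact hne h3.symm
            · exact hi.1 (hcls i hi.2.2 A hA a (h4 ▸ hg1 i hi.2.2) ha)
        · intro i hi j hj hij hadj
          simp only [Finset.mem_erase] at hi hj
          have h1 := hg2 i hi.2.2 j hj.2.2 hij
          rw [hG1] at h1
          push Not at h1
          have h2 := h1 hadj
          rw [Sym2.eq_iff] at h2
          rcases h2 with ⟨h3, h4⟩ | ⟨h3, h4⟩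
          · exact hi.1 (hcls i hi.2.2 A hA a (h3 ▸ hg1 i hi.2.2) ha)
          · exact hj.1 (hcls j hj.2.2 A hA a (h4 ▸ hg1 j hj.2.2) ha)
      have hno1 : ¬ IT G P1 (S.erase B) := by
        rintro ⟨h, hh1, hh2⟩
        have hAe : A ∈ S.erase B := by simp [hA, hBA.symm]
        have hhA := hh1 A hAe
        have hna : ∀ i ∈ S.erase B, ¬ G.Adj a (h i) ∧ ¬ G.Adj b (h i) :=
          fun i hi => hP1na i _ (hh1 i hi)
        have hmem : ∀ i ∈ S, i ≠ A → i ≠ B → h i ∈ P i := by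
          intro i hi hiA hiB
          have := hh1 i (by simp [hi, hiB])
          rw [hP1 i hiA] at this
          exact (Finset.mem_sdiff.1 this).1
        rw [hP1A, Finset.mem_sdiff, Finset.mem_union] at hhA
        apply hno
        rcases hhA.1 with hhA1 | hhA1
        · refine ⟨Function.update h B b, ?_, ?_⟩
          · intro i hi
            by_cases h1 : i = B
            · subst h1; simpa using hbP
            · by_cases h2 : i = A
              · subst h2; simpa [h1] using hhA1
              · simpa [h1] using hmem i hi h2 h1
          · intro i hi j hj hij
            by_cases h1 : i = B
            · subst h1
              simp only [Function.update_self, Function.update_of_ne hij.symm]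
              exact (hna j (by simp [hj, hij.symm])).2
            · by_cases h2 : j = B
              · subst h2
                simp only [Function.update_self, Function.update_of_ne h1]
                exact fun q => (hna i (by simp [hi, hij])).2 q.symm
              · simp only [Function.update_of_ne h1, Function.update_of_ne h2]
                exact hh2 i (by simp [hi, h1]) j (by simp [hj, h2]) hij
        · let h' : ι → V := fun i => if i = A then a else if i = B then h A else h i
          have h'A : h' A = a := by simp [h']
          have h'B : h' B = h A := by simp [h', hBA]
          have h'o : ∀ i, i ≠ A → i ≠ B → h' i = h i := by intro i h1 h2; simp [h', h1, h2]
          have sym : ∀ i ∈ S, i ≠ A → ¬ G.Adj a (h' i) := by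
            intro i hi hiA
            by_cases h1 : i = B
            · subst h1; rw [h'B]; exact (hna A hAe).1
            · rw [h'o i hiA h1]; exact (hna i (by simp [hi, h1])).1
          have symB : ∀ i ∈ S, i ≠ A → i ≠ B → ¬ G.Adj (h A) (h' i) := by
            intro i hi hiA hiB
            rw [h'o i hiA hiB]
            exact hh2 A hAe i (by simp [hi, hiB]) (Ne.symm hiA)
          refine ⟨h', ?_, ?_⟩
          · intro i hi
            by_cases h1 : i = A
            · subst h1; rw [h'A]; exact ha
            · by_cases h2 : i = B
              · subst h2; rw [h'B]; exact hhA1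
              · rw [h'o i h1 h2]; exact hmem i hi h1 h2
          · intro i hi j hj hij
            by_cases h1 : i = A
            · subst h1; rw [h'A]; exact sym j hj hij.symm
            · by_cases h2 : j = A
              · subst h2; rw [h'A]; exact fun q => sym i hi hij q.symm
              · by_cases h3 : i = B
                · subst h3; rw [h'B]; exact symB j hj h2 hij.symm
                · by_cases h4 : j = B
                  · subst h4; rw [h'B]; exact fun q => symB i hi h1 hij q.symm
                  · rw [h'o i h1 h3, h'o j h2 h4]
                    exact hh2 i (by simp [hi, h3]) j (by simp [hj, h4]) hij
      have hcard : (S.erase B).card + G.edgeFinset.card ≤ n := by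
        have := Finset.card_erase_of_mem hB
        have := Finset.card_pos.2 ⟨B, hB⟩
        omega
      obtain ⟨S1, hS1, hAS1, D1, hD1c, hD1m, hD1d, hD1h⟩ :=
        ih G P1 (S.erase B) A hcard hP1d (by simp [hA, hBA.symm]) hIT1 hno1
      have hBS1 : B ∉ S1 := fun h => by simpa using hS1 h
      refine ⟨insert B S1, ?_, by simp [hAS1], insert a (insert b D1), ?_, ?_, ?_, ?_⟩
      · intro i hi
        rcases Finset.mem_insert.1 hi with rfl | h
        · exact hB
        · exact Finset.mem_of_mem_erase (hS1 h)
      · rw [Finset.card_insert_of_notMem hBS1]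
        have h1 := Finset.card_insert_le a (insert b D1)
        have h2 := Finset.card_insert_le b D1
        omega
      · intro d hd
        rcases Finset.mem_insert.1 hd with rfl | hd
        · exact ⟨A, by simp [hAS1], ha⟩
        rcases Finset.mem_insert.1 hd with rfl | hd
        · exact ⟨B, by simp, hbP⟩
        obtain ⟨i, hi, hdi⟩ := hD1m d hd
        by_cases h : i = A
        · subst h
          rw [hP1A, Finset.mem_sdiff, Finset.mem_union] at hdi
          rcases hdi.1 with h | h
          · exact ⟨i, by simp [hi], h⟩
          · exact ⟨B, by simp, h⟩
        · rw [hP1 i h, Finset.mem_sdiff] at hdi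
          exact ⟨i, by simp [hi], hdi.1⟩
      · intro i hi v hv
        by_cases hN : v ∈ nb G a ∪ nb G b
        · rw [Finset.mem_union, mem_nb, mem_nb] at hN
          rcases hN with h | h
          · exact ⟨a, by simp, h.symm⟩
          · exact ⟨b, by simp, h.symm⟩
        · have : ∃ i' ∈ S1, v ∈ P1 i' := by
            by_cases h : i = A
            · refine ⟨A, hAS1, ?_⟩
              rw [hP1A, Finset.mem_sdiff, Finset.mem_union]
              exact ⟨Or.inl (h ▸ hv), hN⟩
            · by_cases h' : i = B
              · refine ⟨A, hAS1, ?_⟩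
                rw [hP1A, Finset.mem_sdiff, Finset.mem_union]
                exact ⟨Or.inr (h' ▸ hv), hN⟩
              · refine ⟨i, by simpa [h'] using hi, ?_⟩
                rw [hP1 i h, Finset.mem_sdiff]
                exact ⟨hv, hN⟩
          obtain ⟨i', hi', hv'⟩ := this
          obtain ⟨d, hd, hdv⟩ := hD1d i' hi' v hv'
          exact ⟨d, by simp [hd], hdv⟩
      · intro _ i hi
        by_cases h : i = A
        · exact ⟨a, by simp, h ▸ ha⟩
        by_cases h' : i = B
        · exact ⟨b, by simp, h' ▸ hbP⟩
        have hi1 : i ∈ S1 := by simpa [h'] using hi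
        have h2 : 2 ≤ S1.card := by
          have : 1 < S1.card := Finset.one_lt_card.2 ⟨i, hi1, A, hAS1, h⟩
          omega
        obtain ⟨d, hd, hdi⟩ := hD1h h2 i hi1
        rw [hP1 i h, Finset.mem_sdiff] at hdi
        exact ⟨d, by simp [hd], hdi.1⟩
    · -- delete the edge
      have hcard : S.card + G1.edgeFinset.card ≤ n := by
        have : G1.edgeFinset ⊂ G.edgeFinset := by
          rw [Finset.ssubset_iff_of_subset]
          · refine ⟨s(a,b), by simpa using hab, ?_⟩
            rw [SimpleGraph.mem_edgeFinset, SimpleGraph.mem_edgeSet, hG1]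
            simp
          · intro e he
            rw [SimpleGraph.mem_edgeFinset] at he ⊢
            induction e with
            | _ x y => exact hG1le x y he
        have := Finset.card_lt_card this
        omega
      have hIT : IT G1 P (S.erase A) :=
        ⟨f, hf1, fun i hi j hj hij h => hf2 i hi j hj hij (hG1le _ _ h)⟩
      obtain ⟨S', h1, h2, D, h3, h4, h5, h6⟩ := ih G1 P S A (by convert hcard) hdis hA hIT hG1T
      refine ⟨S', h1, h2, D, h3, h4, ?_, h6⟩
      intro i hi v hv
      obtain ⟨d, hd, hdv⟩ := h5 i hi v hv
      exact ⟨d, hd, hG1le _ _ hdv⟩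

/-- A version of the Haxell theorem (King form with `k = 2`). -/
theorem exists_IT {V ι : Type*} [Fintype V] [Nonempty V] (G : SimpleGraph V) (P : ι → Finset V)
    (S : Finset ι)
    (hdis : ∀ i ∈ S, ∀ j ∈ S, i ≠ j → Disjoint (P i) (P j))
    (hcond : ∀ i ∈ S, (∃ v ∈ P i, nb G v = ∅) ∨
      (4 ≤ (P i).card ∧ ∀ v ∈ P i, (nb G v).card ≤ 2) ∨
      (3 ≤ (P i).card ∧ ∀ v ∈ P i, (nb G v).card ≤ 1)) : IT G P S := by
  induction S using Finset.induction_on with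
  | empty =>
    obtain ⟨v⟩ := ‹Nonempty V›
    exact ⟨fun _ => v, by simp, by simp⟩
  | insert A S hAS ih =>
    by_contra hno
    have hT : IT G P ((insert A S).erase A) := by
      rw [Finset.erase_insert hAS]
      exact ih (fun i hi j hj => hdis i (by simp [hi]) j (by simp [hj]))
        (fun i hi => hcond i (by simp [hi]))
    obtain ⟨S', hS', hAS', D, hc, hm, hd, hh⟩ :=
      haxell_dom _ G P (insert A S) A le_rfl hdis (by simp) hT hno
    have hdis' : ∀ i ∈ S', ∀ j ∈ S', i ≠ j → Disjoint (P i) (P j) :=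
      fun i hi j hj => hdis i (hS' hi) j (hS' hj)
    have hcond' : ∀ i ∈ S', ((P i).card ≥ 3) ∧ ∀ v ∈ P i, (nb G v).card ≤ 2 ∧
        (nb G v).card + 2 ≤ (P i).card := by
      intro i hi
      rcases hcond i (hS' hi) with ⟨v, hv, hv0⟩ | ⟨h1, h2⟩ | ⟨h1, h2⟩
      · obtain ⟨d, _, hdv⟩ := hd i hi v hv
        rw [← mem_nb, hv0] at hdv
        simp at hdv
      · exact ⟨by omega, fun v hv => ⟨h2 v hv, by have := h2 v hv; omega⟩⟩
      · exact ⟨by omega, fun v hv => ⟨by have := h2 v hv; omega, by have := h2 v hv; omega⟩⟩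
    have hS2 : 2 ≤ S'.card := by
      by_contra hlt
      have h1 : D.card = 0 := by omega
      rw [Finset.card_eq_zero] at h1
      have h3 := (hcond' A hAS').1
      obtain ⟨v, hv⟩ := Finset.card_pos.1 (show 0 < (P A).card by omega)
      obtain ⟨d, hd', _⟩ := hd A hAS' v hv
      simp [h1] at hd'
    have hh := hh hS2
    choose! δ hδD hδP using hh
    have hinj : Set.InjOn δ (S' : Set ι) := by
      intro i hi j hj hij
      by_contra hne
      exact Finset.disjoint_left.1 (hdis' i hi j hj hne) (hδP i hi) (hij ▸ hδP j hj)
    have hsub : S'.image δ ⊆ D := by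
      intro x hx
      obtain ⟨i, hi, rfl⟩ := Finset.mem_image.1 hx
      exact hδD i hi
    have hcard : (S'.image δ).card = S'.card := Finset.card_image_of_injOn hinj
    have hcov : S'.biUnion P ⊆ D.biUnion (nb G) := by
      intro v hv
      obtain ⟨i, hi, hvi⟩ := Finset.mem_biUnion.1 hv
      obtain ⟨d, hd', hdv⟩ := hd i hi v hvi
      exact Finset.mem_biUnion.2 ⟨d, hd', mem_nb.2 hdv.symm⟩
    have e1 : ∑ i ∈ S', (P i).card ≤ ∑ d ∈ D, (nb G d).card := by
      rw [← Finset.card_biUnion hdis']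
      exact (Finset.card_le_card hcov).trans Finset.card_biUnion_le
    have e2 : ∑ d ∈ D, (nb G d).card
        = ∑ d ∈ D \ S'.image δ, (nb G d).card + ∑ i ∈ S', (nb G (δ i)).card := by
      rw [← Finset.sum_sdiff hsub, Finset.sum_image hinj]
    have e3 : ∑ d ∈ D \ S'.image δ, (nb G d).card ≤ (D.card - S'.card) * 2 := by
      rw [← hcard, ← Finset.card_sdiff_of_subset hsub]
      apply Finset.sum_le_card_nsmul
      intro d hd'
      obtain ⟨i, hi, hdi⟩ := hm d (Finset.mem_sdiff.1 hd').1
      exact ((hcond' i hi).2 d hdi).1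
    have e4 : ∑ i ∈ S', (nb G (δ i)).card + 2 * S'.card ≤ ∑ i ∈ S', (P i).card := by
      have : 2 * S'.card = ∑ i ∈ S', 2 := by simp [mul_comm]
      rw [this, ← Finset.sum_add_distrib]
      apply Finset.sum_le_sum
      intro i hi
      exact ((hcond' i hi).2 _ (hδP i hi)).2
    have e5 := Finset.card_le_card hsub
    omega

end BK


namespace BK
open Finset Classical

/-- union of a family -/
noncomputable def uni {V : Type*} (C : Finset (Finset V)) : Finset V := C.biUnion id
/-- intersection of a family -/
noncomputable def inter {V : Type*} [Fintype V] (C : Finset (Finset V)) : Finset V :=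
  Finset.univ.filter (fun v => ∀ Q ∈ C, v ∈ Q)

lemma mem_uni {V : Type*} {C : Finset (Finset V)} {v : V} : v ∈ uni C ↔ ∃ Q ∈ C, v ∈ Q := by
  simp [uni]
lemma mem_inter {V : Type*} [Fintype V] {C : Finset (Finset V)} {v : V} :
    v ∈ inter C ↔ ∀ Q ∈ C, v ∈ Q := by
  simp [inter]

/-- Data allowing to choose representatives for a family of cliques. -/
def ClassData {V : Type*} [Fintype V] (G : SimpleGraph V) (C : Finset (Finset V)) : Prop :=
  ∃ (O : Finset V) (Jf : V → Finset V),
    (∀ o ∈ O, o ∈ Jf o ∧ Jf o ⊆ uni C ∧ (∀ x ∈ Jf o, ∀ y ∈ Jf o, ¬ G.Adj x y) ∧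
      (∀ Q ∈ C, ∃ x ∈ Q, x ∈ Jf o) ∧ ∀ j ∈ Jf o, j ≠ o → nb G j ⊆ uni C) ∧
    ((∃ o ∈ O, nb G o ⊆ uni C) ∨ (4 ≤ O.card ∧ ∀ o ∈ O, (nb G o \ uni C).card ≤ 2) ∨
      (3 ≤ O.card ∧ ∀ o ∈ O, (nb G o \ uni C).card ≤ 1))

theorem transversal {V : Type*} [Fintype V] [Nonempty V] (G : SimpleGraph V)
    (S : Finset (Finset (Finset V)))
    (hdis : ∀ C ∈ S, ∀ C' ∈ S, C ≠ C' → Disjoint (uni C) (uni C'))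
    (hdata : ∀ C ∈ S, ClassData G C) :
    ∃ J : Finset V, (∀ x ∈ J, ∀ y ∈ J, ¬ G.Adj x y) ∧ ∀ C ∈ S, ∀ Q ∈ C, ∃ x ∈ Q, x ∈ J := by
  choose! O Jf h1 h2 using hdata
  have hOU : ∀ C ∈ S, O C ⊆ uni C := fun C hC o ho => (h1 C hC o ho).2.1 (h1 C hC o ho).1
  let G' : SimpleGraph V :=
    { Adj := fun x y => G.Adj x y ∧ ∃ C ∈ S, ∃ C' ∈ S, C ≠ C' ∧ x ∈ uni C ∧ y ∈ uni C'
      symm := ⟨by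
        rintro x y ⟨h, C, hC, C', hC', hne, hx, hy⟩
        exact ⟨h.symm, C', hC', C, hC, hne.symm, hy, hx⟩⟩
      loopless := ⟨fun x h => h.1.ne rfl⟩ }
  have hG' : ∀ x y, G'.Adj x y ↔ G.Adj x y ∧ ∃ C ∈ S, ∃ C' ∈ S, C ≠ C' ∧ x ∈ uni C ∧ y ∈ uni C' :=
    fun x y => Iff.rfl
  have hnb : ∀ C ∈ S, ∀ o ∈ uni C, nb G' o ⊆ nb G o \ uni C := by
    intro C hC o ho y hy
    rw [mem_nb, hG'] at hy
    obtain ⟨hadj, C1, hC1, C2, hC2, hne, ho1, hy2⟩ := hy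
    have : C1 = C := by
      by_contra hc
      exact Finset.disjoint_left.1 (hdis C1 hC1 C hC hc) ho1 ho
    subst this
    rw [Finset.mem_sdiff, mem_nb]
    exact ⟨hadj, fun hy1 => Finset.disjoint_left.1 (hdis C1 hC1 C2 hC2 hne) hy1 hy2⟩
  have hIT : IT G' O S := by
    apply exists_IT
    · intro i hi j hj hij
      exact Disjoint.mono (hOU i hi) (hOU j hj) (hdis i hi j hj hij)
    · intro C hC
      rcases h2 C hC with ⟨o, ho, hn⟩ | ⟨hc, hn⟩ | ⟨hc, hn⟩
      · left
        refine ⟨o, ho, ?_⟩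
        have := hnb C hC o (hOU C hC ho)
        rw [Finset.sdiff_eq_empty_iff_subset.2 hn] at this
        exact Finset.subset_empty.1 this
      · right; left
        exact ⟨hc, fun o ho => (Finset.card_le_card (hnb C hC o (hOU C hC ho))).trans (hn o ho)⟩
      · right; right
        exact ⟨hc, fun o ho => (Finset.card_le_card (hnb C hC o (hOU C hC ho))).trans (hn o ho)⟩
  obtain ⟨f, hf1, hf2⟩ := hIT
  refine ⟨S.biUnion (fun C => Jf C (f C)), ?_, ?_⟩
  · intro x hx y hy hadj
    obtain ⟨C, hC, hxC⟩ := Finset.mem_biUnion.1 hx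
    obtain ⟨C', hC', hyC⟩ := Finset.mem_biUnion.1 hy
    by_cases hCC : C = C'
    · subst hCC
      exact (h1 C hC _ (hf1 C hC)).2.2.1 x hxC y hyC hadj
    · have hxU := (h1 C hC _ (hf1 C hC)).2.1 hxC
      have hyU := (h1 C' hC' _ (hf1 C' hC')).2.1 hyC
      have hx' : x = f C := by
        by_contra hne
        have := (h1 C hC _ (hf1 C hC)).2.2.2.2 x hxC hne (mem_nb.2 hadj)
        exact Finset.disjoint_left.1 (hdis C hC C' hC' hCC) this hyU
      have hy' : y = f C' := by
        by_contra hne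
        have := (h1 C' hC' _ (hf1 C' hC')).2.2.2.2 y hyC hne (mem_nb.2 hadj.symm)
        exact Finset.disjoint_left.1 (hdis C hC C' hC' hCC) hxU this
      apply hf2 C hC C' hC' hCC
      rw [hG', ← hx', ← hy']
      exact ⟨hadj, C, hC, C', hC', hCC, hxU, hyU⟩
  · intro C hC Q hQ
    obtain ⟨x, hx, hxJ⟩ := (h1 C hC _ (hf1 C hC)).2.2.2.1 Q hQ
    exact ⟨x, hx, Finset.mem_biUnion.2 ⟨C, hC, hxJ⟩⟩

/-- two sets meet -/
def Meet {V : Type*} (Q Q' : Finset V) : Prop := ∃ x, x ∈ Q ∧ x ∈ Q'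

lemma Meet.symm {V : Type*} {Q Q' : Finset V} (h : Meet Q Q') : Meet Q' Q := by
  obtain ⟨x, h1, h2⟩ := h; exact ⟨x, h2, h1⟩

/-- A connected, closed family of `t`-cliques. -/
structure Comp {V : Type*} (G : SimpleGraph V) (t : ℕ) (C : Finset (Finset V)) : Prop where
  clq : ∀ Q ∈ C, G.IsNClique t Q
  closed : ∀ Q ∈ C, ∀ Q', G.IsNClique t Q' → Meet Q Q' → Q' ∈ C
  conn : ∀ Q ∈ C, ∀ p : Finset V → Prop, p Q →
    (∀ Q1 ∈ C, ∀ Q2 ∈ C, p Q1 → Meet Q1 Q2 → p Q2) → ∀ Q' ∈ C, p Q'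
  ne : C.Nonempty

theorem hit_of_data {V : Type*} [Fintype V] [Nonempty V] (G : SimpleGraph V) (t : ℕ) (ht : 1 ≤ t)
    (h : ∀ C, Comp G t C → ClassData G C) :
    ∃ J : Finset V, (∀ x ∈ J, ∀ y ∈ J, ¬ G.Adj x y) ∧
      ∀ Q, G.IsNClique t Q → ∃ x ∈ Q, x ∈ J := by
  let K : Finset (Finset V) := Finset.univ.filter (fun Q => G.IsNClique t Q)
  have hK : ∀ Q, Q ∈ K ↔ G.IsNClique t Q := by simp [K]
  let R : Finset V → Finset V → Prop := fun Q Q' => Q ∈ K ∧ Q' ∈ K ∧ Meet Q Q'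
  have hRs : ∀ Q Q', R Q Q' → R Q' Q := fun Q Q' h => ⟨h.2.1, h.1, h.2.2.symm⟩
  let E := Relation.ReflTransGen R
  have hEs : ∀ Q Q', E Q Q' → E Q' Q := by
    intro Q Q' h
    induction h with
    | refl => exact Relation.ReflTransGen.refl
    | tail _ hbc ih => exact Relation.ReflTransGen.head (hRs _ _ hbc) ih
  let comp : Finset V → Finset (Finset V) := fun Q => K.filter (fun Q' => E Q Q')
  have hmc : ∀ Q Q', Q' ∈ comp Q ↔ Q' ∈ K ∧ E Q Q' := by simp [comp]
  have hcomp : ∀ Q ∈ K, Comp G t (comp Q) := by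
    intro Q hQ
    refine ⟨?_, ?_, ?_, ⟨Q, (hmc _ _).2 ⟨hQ, Relation.ReflTransGen.refl⟩⟩⟩
    · intro Q' hQ'; exact (hK _).1 ((hmc _ _).1 hQ').1
    · intro Q1 hQ1 Q2 hQ2 hm
      rw [hmc] at hQ1 ⊢
      exact ⟨(hK _).2 hQ2, hQ1.2.tail ⟨hQ1.1, (hK _).2 hQ2, hm⟩⟩
    · intro Q1 hQ1 p hp hstep Q2 hQ2
      rw [hmc] at hQ1 hQ2
      have hE : E Q1 Q2 := (hEs _ _ hQ1.2).trans hQ2.2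
      have : Q2 ∈ comp Q ∧ p Q2 := by
        have hh : ∀ Z, E Q1 Z → Z ∈ comp Q ∧ p Z := by
          intro Z hZ
          induction hZ with
          | refl => exact ⟨(hmc _ _).2 hQ1, hp⟩
          | @tail b c hb hbc ihb =>
            have hc : c ∈ comp Q := by
              rw [hmc]
              exact ⟨hbc.2.1, ((hmc _ _).1 ihb.1).2.tail hbc⟩
            exact ⟨hc, hstep b ihb.1 c hc ihb.2 hbc.2.2⟩
        exact hh Q2 hE
      exact this.2
  obtain ⟨J, hJ1, hJ2⟩ := transversal G (K.image comp) (by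
    intro C hC C' hC' hne
    obtain ⟨Q, hQ, rfl⟩ := Finset.mem_image.1 hC
    obtain ⟨Q', hQ', rfl⟩ := Finset.mem_image.1 hC'
    rw [Finset.disjoint_left]
    intro x hx hx'
    rw [mem_uni] at hx hx'
    obtain ⟨A, hA, hxA⟩ := hx
    obtain ⟨B, hB, hxB⟩ := hx'
    rw [hmc] at hA hB
    apply hne
    have hAB : E A B := Relation.ReflTransGen.single ⟨hA.1, hB.1, x, hxA, hxB⟩
    have hQQ : E Q Q' := (hA.2.trans hAB).trans (hEs _ _ hB.2)
    ext Z
    rw [hmc, hmc]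
    exact ⟨fun hz => ⟨hz.1, (hEs _ _ hQQ).trans hz.2⟩, fun hz => ⟨hz.1, hQQ.trans hz.2⟩⟩)
    (by
      intro C hC
      obtain ⟨Q, hQ, rfl⟩ := Finset.mem_image.1 hC
      exact h _ (hcomp Q hQ))
  refine ⟨J, hJ1, ?_⟩
  intro Q hQ
  have hQK := (hK Q).2 hQ
  exact hJ2 (comp Q) (Finset.mem_image_of_mem _ hQK) Q ((hmc _ _).2 ⟨hQK, Relation.ReflTransGen.refl⟩)

/-- Hajnal lemma. -/
theorem hajnal {V : Type*} [Fintype V] (G : SimpleGraph V) (t : ℕ) (hfree : G.CliqueFree (t+1))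
    (C : Finset (Finset V)) (hne : C.Nonempty) (hC : ∀ Q ∈ C, G.IsNClique t Q) :
    2 * t ≤ (inter C).card + (uni C).card := by
  induction hne using Finset.Nonempty.cons_induction with
  | singleton Q =>
    have h1 : inter {Q} = Q := by ext; simp [mem_inter]
    have h2 : uni {Q} = Q := by ext; simp [mem_uni]
    have := (hC Q (by simp)).card_eq
    rw [h1, h2]; omega
  | cons Q C hQ hne ih =>
    have ih := ih (fun Q' h => hC Q' (by simp [h]))
    have hQc := hC Q (by simp)
    have h1 : inter (Finset.cons Q C hQ) = inter C ∩ Q := by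
      ext v; simp [mem_inter, and_comm]
    have h2 : uni (Finset.cons Q C hQ) = uni C ∪ Q := by
      ext v; simp [mem_uni, or_comm]
    have hcl : G.IsClique (↑(inter C ∪ (Q ∩ uni C)) : Set V) := by
      have hIC : ∀ x ∈ inter C, ∀ y ∈ uni C, x ≠ y → G.Adj x y := by
        intro x hx y hy hxy
        obtain ⟨Q', hQ', hyQ⟩ := mem_uni.1 hy
        exact (hC Q' (by simp [hQ'])).isClique (mem_inter.1 hx Q' hQ') hyQ hxy
      have hIU : inter C ⊆ uni C := by
        intro x hx
        obtain ⟨Q', hQ'⟩ := hne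
        exact mem_uni.2 ⟨Q', hQ', mem_inter.1 hx Q' hQ'⟩
      intro x hx y hy hxy
      simp only [Finset.coe_union, Finset.coe_inter, Set.mem_union, Set.mem_inter_iff,
        Finset.mem_coe] at hx hy
      rcases hx with hx | hx
      · rcases hy with hy | hy
        · exact hIC x hx y (hIU hy) hxy
        · exact hIC x hx y hy.2 hxy
      · rcases hy with hy | hy
        · exact (hIC y hy x hx.2 hxy.symm).symm
        · exact hQc.isClique hx.1 hy.1 hxy
    have hle : (inter C ∪ (Q ∩ uni C)).card ≤ t := by
      by_contra hlt
      obtain ⟨s, hs, hsc⟩ := Finset.exists_subset_card_eq (show t + 1 ≤ (inter C ∪ (Q ∩ uni C)).card by omega)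
      exact hfree s ⟨hcl.subset (by exact_mod_cast hs), hsc⟩
    have e1 := Finset.card_union_add_card_inter (inter C) (Q ∩ uni C)
    have e2 := Finset.card_union_add_card_inter (uni C) Q
    have e3 : inter C ∩ (Q ∩ uni C) ⊆ inter C ∩ Q := by
      intro x; simp; tauto
    have e4 := Finset.card_le_card e3
    have e5 := hQc.card_eq
    have e6 : Q ∩ uni C = uni C ∩ Q := Finset.inter_comm _ _
    rw [h1, h2]
    rw [e6] at e1 e4 hle
    omega

section
variable {V : Type*} [Fintype V] {G : SimpleGraph V} {t : ℕ}

lemma uni_sub_of_inter {C : Finset (Finset V)} (hC : ∀ Q ∈ C, G.IsNClique t Q) {v : V}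
    (hv : v ∈ inter C) : uni C ⊆ insert v (nb G v) := by
  intro y hy
  obtain ⟨Q', hQ', hyQ⟩ := mem_uni.1 hy
  by_cases h : y = v
  · simp [h]
  · rw [Finset.mem_insert, mem_nb]
    exact Or.inr ((hC Q' hQ').isClique (mem_inter.1 hv Q' hQ') hyQ (Ne.symm h))

lemma not_self_nb (v : V) : v ∉ nb G v := by rw [mem_nb]; exact fun h => h.ne rfl

lemma card_inter_family (hfree : G.CliqueFree (t+1)) (hdeg : ∀ v, (nb G v).card ≤ t + 1)
    {C : Finset (Finset V)} (hne : C.Nonempty) (hC : ∀ Q ∈ C, G.IsNClique t Q)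
    (hI : (inter C).Nonempty) : t ≤ (inter C).card + 2 ∧ (uni C).card ≤ t + 2 := by
  have h1 := hajnal G t hfree C hne hC
  obtain ⟨v, hv⟩ := hI
  have h2 := Finset.card_le_card (uni_sub_of_inter hC hv)
  rw [Finset.card_insert_of_notMem (not_self_nb v)] at h2
  have := hdeg v
  omega

lemma card_meet (hfree : G.CliqueFree (t+1)) (hdeg : ∀ v, (nb G v).card ≤ t + 1)
    {Q Q' : Finset V} (hQ : G.IsNClique t Q) (hQ' : G.IsNClique t Q') (hm : Meet Q Q') :
    t ≤ (Q ∩ Q').card + 2 := by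
  have h1 : inter {Q, Q'} = Q ∩ Q' := by ext; simp [mem_inter]
  have := card_inter_family (G := G) (t := t) hfree hdeg (C := {Q, Q'}) (by simp)
    (by intro Z hZ; simp at hZ; rcases hZ with rfl | rfl <;> assumption)
    (by rw [h1]; obtain ⟨x, hx⟩ := hm; exact ⟨x, by simpa using hx⟩)
  rw [h1] at this
  exact this.1

/-- pairwise meeting cliques have a common vertex -/
lemma core_nonempty (ht : 4 ≤ t) (hfree : G.CliqueFree (t+1))
    (hdeg : ∀ v, (nb G v).card ≤ t + 1)
    (C : Finset (Finset V)) (hne : C.Nonempty) (hC : ∀ Q ∈ C, G.IsNClique t Q)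
    (hm : ∀ Q ∈ C, ∀ Q' ∈ C, Meet Q Q') : (inter C).Nonempty := by
  induction hne using Finset.Nonempty.cons_induction with
  | singleton Q =>
    obtain ⟨x, hx, _⟩ := hm Q (by simp) Q (by simp)
    exact ⟨x, by simpa [mem_inter] using hx⟩
  | cons Q C hQ hne ih =>
    have hC' : ∀ Q' ∈ C, G.IsNClique t Q' := fun Q' h => hC Q' (by simp [h])
    have ih := ih hC' (fun A hA B hB => hm A (by simp [hA]) B (by simp [hB]))
    obtain ⟨hc1, hc2⟩ := card_inter_family hfree hdeg hne hC' ih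
    have hQc := hC Q (by simp)
    have h1 : inter (Finset.cons Q C hQ) = inter C ∩ Q := by
      ext v; simp [mem_inter, and_comm]
    have h2 : uni (Finset.cons Q C hQ) = uni C ∪ Q := by
      ext v; simp [mem_uni, or_comm]
    by_contra hemp
    rw [Finset.not_nonempty_iff_eq_empty] at hemp
    have hH := hajnal G t hfree _ (Finset.cons_nonempty hQ) hC
    have hH' := hajnal G t hfree _ hne hC'
    rw [hemp, h2, Finset.card_empty, zero_add] at hH
    have e2 := Finset.card_union_add_card_inter (uni C) Q
    rw [h1] at hemp
    -- each member of C
    have hmem : ∀ Z ∈ C, (inter C).card + (Z ∩ Q).card ≤ t := by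
      intro Z hZ
      have hd : Disjoint (inter C) (Z ∩ Q) := by
        rw [Finset.disjoint_left]
        intro x hx hx'
        have : x ∈ inter C ∩ Q := by
          rw [Finset.mem_inter] at hx' ⊢; exact ⟨hx, hx'.2⟩
        rw [hemp] at this; simp at this
      rw [← Finset.card_union_of_disjoint hd, ← (hC' Z hZ).card_eq]
      apply Finset.card_le_card
      apply Finset.union_subset
      · intro x hx; exact mem_inter.1 hx Z hZ
      · exact Finset.inter_subset_left
    have hmt : ∀ Z ∈ C, t ≤ (Z ∩ Q).card + 2 := fun Z hZ =>
      card_meet hfree hdeg (hC' Z hZ) hQc (hm Z (by simp [hZ]) Q (by simp))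
    obtain ⟨Z, hZ⟩ := hne
    have a1 := hmem Z hZ
    have a2 := hmt Z hZ
    have a3 := hQc.card_eq
    have ht4 : t = 4 := by omega
    subst ht4
    have hic : (inter C).card = 2 := by omega
    have huc : (uni C).card = 6 := by omega
    -- uni C ∩ Q has size at most 2, hence equals Z ∩ Q for all Z
    have hsub : ∀ Z ∈ C, Z ∩ Q ⊆ uni C ∩ Q := by
      intro Z hZ
      exact Finset.inter_subset_inter_right (fun x hx => mem_uni.2 ⟨Z, hZ, hx⟩)
    have heq : ∀ Z ∈ C, Z ∩ Q = uni C ∩ Q := by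
      intro Z hZ
      apply Finset.eq_of_subset_of_card_le (hsub Z hZ)
      have := hmt Z hZ
      omega
    have hZin : ∀ Z ∈ C, Z ⊆ inter C ∪ (uni C ∩ Q) := by
      intro Z hZ
      have : inter C ∪ (uni C ∩ Q) ⊆ Z := by
        apply Finset.union_subset
        · intro x hx; exact mem_inter.1 hx Z hZ
        · rw [← heq Z hZ]; exact Finset.inter_subset_left
      have hd : Disjoint (inter C) (uni C ∩ Q) := by
        rw [Finset.disjoint_left]
        intro x hx hx'
        have : x ∈ inter C ∩ Q := by
          rw [Finset.mem_inter] at hx' ⊢; exact ⟨hx, hx'.2⟩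
        rw [hemp] at this; simp at this
      have hcc := Finset.card_union_of_disjoint hd
      have := Finset.eq_of_subset_of_card_le this (by
        rw [(hC' Z hZ).card_eq, hcc, ← heq Z hZ]
        have := hmt Z hZ
        omega)
      exact this.symm.subset
    have : uni C ⊆ Z := by
      intro x hx
      obtain ⟨Z', hZ', hxZ⟩ := mem_uni.1 hx
      have := hZin Z' hZ' hxZ
      rw [Finset.mem_union] at this
      rcases this with h | h
      · exact mem_inter.1 h Z hZ
      · rw [← heq Z hZ] at h; exact (Finset.mem_inter.1 h).1
    have := Finset.card_le_card this
    have := (hC' Z hZ).card_eq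
    omega

lemma core_data (ht : 4 ≤ t) (hfree : G.CliqueFree (t+1))
    (hdeg : ∀ v, (nb G v).card ≤ t + 1)
    (C : Finset (Finset V)) (hne : C.Nonempty) (hC : ∀ Q ∈ C, G.IsNClique t Q)
    (hm : ∀ Q ∈ C, ∀ Q' ∈ C, Meet Q Q') : ClassData G C := by
  have hI := core_nonempty ht hfree hdeg C hne hC hm
  have h1 := card_inter_family hfree hdeg hne hC hI
  have h2 := hajnal G t hfree C hne hC
  have hIU : inter C ⊆ uni C := by
    intro x hx
    obtain ⟨Q', hQ'⟩ := hne
    exact mem_uni.2 ⟨Q', hQ', mem_inter.1 hx Q' hQ'⟩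
  have hext : ∀ o ∈ inter C, (nb G o \ uni C).card + (uni C).card ≤ t + 2 := by
    intro o ho
    have hd : Disjoint (nb G o \ uni C) (uni C) := Finset.sdiff_disjoint
    rw [← Finset.card_union_of_disjoint hd]
    have : (nb G o \ uni C) ∪ uni C ⊆ insert o (nb G o) := by
      apply Finset.union_subset
      · exact (Finset.sdiff_subset).trans (Finset.subset_insert _ _)
      · exact uni_sub_of_inter hC ho
    have := Finset.card_le_card this
    rw [Finset.card_insert_of_notMem (not_self_nb o)] at this
    have := hdeg o
    omega
  have hUt : t ≤ (uni C).card := by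
    obtain ⟨Q', hQ'⟩ := hne
    rw [← (hC Q' hQ').card_eq]
    exact Finset.card_le_card (fun x hx => mem_uni.2 ⟨Q', hQ', hx⟩)
  refine ⟨inter C, fun o => {o}, ?_, ?_⟩
  · intro o ho
    refine ⟨by simp, by simpa using hIU ho, by simp, ?_, by simp⟩
    intro Q hQ
    exact ⟨o, mem_inter.1 ho Q hQ, by simp⟩
  · rcases Nat.lt_or_ge (uni C).card (t+1) with h | h
    · right; left
      exact ⟨by omega, fun o ho => by have := hext o ho; omega⟩
    · rcases Nat.lt_or_ge (uni C).card (t+2) with h | h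
      · right; right
        exact ⟨by omega, fun o ho => by have := hext o ho; omega⟩
      · left
        obtain ⟨o, ho⟩ := hI
        refine ⟨o, ho, ?_⟩
        have := hext o ho
        rw [← Finset.sdiff_eq_empty_iff_subset, ← Finset.card_eq_zero]
        omega

/-- transitivity of meeting for `t ≥ 5` -/
theorem hit5 [Nonempty V] (ht : 5 ≤ t) (hfree : G.CliqueFree (t+1))
    (hdeg : ∀ v, (nb G v).card ≤ t + 1) :
    ∃ J : Finset V, (∀ x ∈ J, ∀ y ∈ J, ¬ G.Adj x y) ∧
      ∀ Q, G.IsNClique t Q → ∃ x ∈ Q, x ∈ J := by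
  apply hit_of_data G t (by omega)
  intro C hC
  apply core_data (by omega) hfree hdeg C hC.ne hC.clq
  intro Q hQ
  apply hC.conn Q hQ (fun Z => Meet Q Z)
  · have := (hC.clq Q hQ).card_eq
    obtain ⟨x, hx⟩ := Finset.card_pos.1 (show 0 < Q.card by omega)
    exact ⟨x, hx, hx⟩
  · intro Q1 h1 Q2 h2 hm1 hm2
    have a1 := card_meet hfree hdeg (hC.clq Q hQ) (hC.clq Q1 h1) hm1
    have a2 := card_meet hfree hdeg (hC.clq Q1 h1) (hC.clq Q2 h2) hm2
    by_contra hno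
    have hd : Disjoint (Q ∩ Q1) (Q1 ∩ Q2) := by
      rw [Finset.disjoint_left]
      intro x hx hx'
      rw [Finset.mem_inter] at hx hx'
      exact hno ⟨x, hx.1, hx'.2⟩
    have := Finset.card_union_of_disjoint hd
    have h3 : (Q ∩ Q1) ∪ (Q1 ∩ Q2) ⊆ Q1 := by
      intro x; simp; tauto
    have := Finset.card_le_card h3
    have := (hC.clq Q1 h1).card_eq
    omega

end
end BK


namespace BK
open Finset Classical

/-- a chain of pairs, consecutive pairs forming 4-cliques -/
structure Chain {V : Type*} (G : SimpleGraph V) (m : ℕ) (X : ℕ → Finset V) : Prop where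
  card : ∀ i ≤ m, (X i).card = 2
  disj : ∀ i ≤ m, ∀ j ≤ m, i ≠ j → Disjoint (X i) (X j)
  clq : ∀ i < m, G.IsNClique 4 (X i ∪ X (i+1))

section
variable {V : Type*} [Fintype V] {G : SimpleGraph V}

lemma local_nb (hdeg : ∀ v, (nb G v).card ≤ 5) {A B D : Finset V}
    (hA : A.card = 2) (hB : B.card = 2) (hD : D.card = 2)
    (hAB : Disjoint A B) (hAD : Disjoint A D) (hBD : Disjoint B D)
    (c1 : G.IsNClique 4 (A ∪ B)) (c2 : G.IsNClique 4 (B ∪ D)) {v : V} (hv : v ∈ B) :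
    insert v (nb G v) = A ∪ B ∪ D := by
  symm
  apply Finset.eq_of_subset_of_card_le
  · intro x hx
    by_cases h : x = v
    · simp [h]
    rw [Finset.mem_insert, mem_nb]
    right
    simp only [Finset.mem_union] at hx
    rcases hx with (hx | hx) | hx
    · exact c1.isClique (by simp [hv]) (by simp [hx]) (Ne.symm h)
    · exact c1.isClique (by simp [hv]) (by simp [hx]) (Ne.symm h)
    · exact c2.isClique (by simp [hv]) (by simp [hx]) (Ne.symm h)
  · rw [Finset.card_insert_of_notMem (not_self_nb v), Finset.card_union_of_disjoint,
      Finset.card_union_of_disjoint hAB]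
    · have := hdeg v; omega
    · rw [Finset.disjoint_union_left]; exact ⟨hAD, hBD⟩

lemma clique_sub_nb {Z : Finset V} (hZ : G.IsClique (Z : Set V)) {v : V} (hv : v ∈ Z) :
    Z ⊆ insert v (nb G v) := by
  intro x hx
  by_cases h : x = v
  · simp [h]
  · rw [Finset.mem_insert, mem_nb]
    exact Or.inr (hZ hv hx (Ne.symm h))

/-- cliques through a pair in a chain of length 3 -/
lemma local_clq (hdeg : ∀ v, (nb G v).card ≤ 5) {A B D E : Finset V}
    (hA : A.card = 2) (hB : B.card = 2) (hD : D.card = 2) (hE : E.card = 2)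
    (hAB : Disjoint A B) (hAD : Disjoint A D) (hAE : Disjoint A E) (hBD : Disjoint B D)
    (hBE : Disjoint B E) (hDE : Disjoint D E)
    (c1 : G.IsNClique 4 (A ∪ B)) (c2 : G.IsNClique 4 (B ∪ D)) (c3 : G.IsNClique 4 (D ∪ E))
    {Z : Finset V} (hZ : G.IsNClique 4 Z) (hm : Meet Z B) : Z = A ∪ B ∨ Z = B ∪ D := by
  obtain ⟨v, hvZ, hvB⟩ := hm
  have h1 := clique_sub_nb hZ.isClique hvZ
  rw [local_nb hdeg hA hB hD hAB hAD hBD c1 c2 hvB] at h1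
  by_cases hq : ∃ q ∈ Z, q ∈ D
  · right
    obtain ⟨q, hqZ, hqD⟩ := hq
    have h2 := clique_sub_nb hZ.isClique hqZ
    rw [local_nb hdeg hB hD hE hBD hBE hDE c2 c3 hqD] at h2
    apply Finset.eq_of_subset_of_card_le
    · intro x hx
      have a1 := h1 hx
      have a2 := h2 hx
      simp only [Finset.mem_union] at a1 a2 ⊢
      rcases a1 with (a | a) | a
      · rcases a2 with (b | b) | b
        · exact Or.inl b
        · exact Or.inr b
        · exact (Finset.disjoint_left.1 hAE a b).elim
      · exact Or.inl a
      · exact Or.inr a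
    · rw [hZ.card_eq, c2.card_eq]
  · left
    push Not at hq
    apply Finset.eq_of_subset_of_card_le
    · intro x hx
      have a1 := h1 hx
      simp only [Finset.mem_union] at a1 ⊢
      rcases a1 with a | a
      · exact a
      · exact (hq x hx a).elim
    · rw [hZ.card_eq, c1.card_eq]

lemma Chain.rev {m : ℕ} {X : ℕ → Finset V} (h : Chain G m X) : Chain G m (fun i => X (m - i)) := by
  refine ⟨fun i hi => h.card _ (by omega), fun i hi j hj hij => h.disj _ (by omega) _ (by omega)
    (by omega), fun i hi => ?_⟩
  have := h.clq (m - (i+1)) (by omega)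
  have e : m - (i+1) + 1 = m - i := by omega
  rw [e] at this
  simpa [Finset.union_comm] using this

lemma Chain.nb_eq (hdeg : ∀ v, (nb G v).card ≤ 5) {m : ℕ} {X : ℕ → Finset V} (h : Chain G m X)
    {i : ℕ} (hi : i + 2 ≤ m) {v : V} (hv : v ∈ X (i+1)) :
    insert v (nb G v) = X i ∪ X (i+1) ∪ X (i+2) :=
  local_nb hdeg (h.card _ (by omega)) (h.card _ (by omega)) (h.card _ (by omega))
    (h.disj _ (by omega) _ (by omega) (by omega)) (h.disj _ (by omega) _ (by omega) (by omega))
    (h.disj _ (by omega) _ (by omega) (by omega)) (h.clq i (by omega)) (h.clq (i+1) (by omega)) hv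

lemma Chain.clq_eq' (hdeg : ∀ v, (nb G v).card ≤ 5) {m : ℕ} {X : ℕ → Finset V} (h : Chain G m X)
    {i : ℕ} (hi : i + 3 ≤ m) {Z : Finset V} (hZ : G.IsNClique 4 Z) (hm : Meet Z (X (i+1))) :
    Z = X i ∪ X (i+1) ∨ Z = X (i+1) ∪ X (i+2) :=
  local_clq hdeg (h.card i (by omega)) (h.card _ (by omega)) (h.card (i+2) (by omega))
    (h.card (i+3) (by omega))
    (h.disj _ (by omega) _ (by omega) (by omega)) (h.disj _ (by omega) _ (by omega) (by omega))
    (h.disj _ (by omega) _ (by omega) (by omega)) (h.disj _ (by omega) _ (by omega) (by omega))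
    (h.disj _ (by omega) _ (by omega) (by omega)) (h.disj _ (by omega) _ (by omega) (by omega))
    (h.clq i (by omega)) (h.clq (i+1) (by omega)) (h.clq (i+2) (by omega)) hZ hm

lemma Chain.clq_eq (hdeg : ∀ v, (nb G v).card ≤ 5) {m : ℕ} {X : ℕ → Finset V} (h : Chain G m X)
    (hm3 : 3 ≤ m) {i : ℕ} (hi : i + 2 ≤ m) {Z : Finset V} (hZ : G.IsNClique 4 Z)
    (hm : Meet Z (X (i+1))) : Z = X i ∪ X (i+1) ∨ Z = X (i+1) ∪ X (i+2) := by
  by_cases h3 : i + 3 ≤ m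
  · exact h.clq_eq' hdeg h3 hZ hm
  · have hi' : i + 2 = m := by omega
    have := h.rev.clq_eq' hdeg (i := 0) (by omega) hZ (by
      have e : m - (0+1) = i + 1 := by omega
      simpa only [e] using hm)
    have e1 : m - (0+1) = i + 1 := by omega
    have e2 : m - (0+2) = i := by omega
    have e3 : m - 0 = i + 2 := by omega
    simp only [e1, e2, e3] at this
    rw [Finset.union_comm (X (i+2)), Finset.union_comm (X (i+1)) (X i)] at this
    exact this.symm

lemma Chain.mem_comp {C : Finset (Finset V)} (hC : Comp G 4 C) {m : ℕ} {X : ℕ → Finset V}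
    (h : Chain G m X) (h0 : X 0 ∪ X 1 ∈ C) : ∀ i < m, X i ∪ X (i+1) ∈ C := by
  intro i
  induction i with
  | zero => intro _; exact h0
  | succ i ih =>
    intro hi
    refine hC.closed _ (ih (by omega)) _ (h.clq _ hi) ?_
    obtain ⟨x, hx⟩ := Finset.card_pos.1 (show 0 < (X (i+1)).card by rw [h.card _ (by omega)]; omega)
    exact ⟨x, by simp [hx], by simp [hx]⟩

lemma Chain.bound {m : ℕ} {X : ℕ → Finset V} (h : Chain G m X) : m < Fintype.card V := by
  have h1 : ((Finset.range (m+1)).biUnion X).card = ∑ i ∈ Finset.range (m+1), (X i).card := by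
    apply Finset.card_biUnion
    intro i hi j hj hij
    simp at hi hj
    exact h.disj i (by omega) j (by omega) hij
  have h2 : ∑ i ∈ Finset.range (m+1), (X i).card = ∑ i ∈ Finset.range (m+1), 2 := by
    apply Finset.sum_congr rfl
    intro i hi
    simp at hi
    exact h.card i (by omega)
  have h3 := Finset.card_le_univ ((Finset.range (m+1)).biUnion X)
  simp at h2
  omega

lemma exists_max_chain (C : Finset (Finset V)) {X : ℕ → Finset V} (h : Chain G 3 X)
    (h0 : X 0 ∪ X 1 ∈ C) :
    ∃ m Y, 3 ≤ m ∧ Chain G m Y ∧ Y 0 ∪ Y 1 ∈ C ∧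
      ∀ Y', Chain G (m+1) Y' → Y' 0 ∪ Y' 1 ∉ C := by
  by_contra hcon
  push Not at hcon
  have : ∀ k, ∃ Y, Chain G (k+3) Y ∧ Y 0 ∪ Y 1 ∈ C := by
    intro k
    induction k with
    | zero => exact ⟨X, h, h0⟩
    | succ k ih =>
      obtain ⟨Y, hY, hY0⟩ := ih
      obtain ⟨Y', hY', hY0'⟩ := hcon (k+3) Y (by omega) hY hY0
      exact ⟨Y', by convert hY' using 1, hY0'⟩
  obtain ⟨Y, hY, _⟩ := this (Fintype.card V)
  have := hY.bound
  omega

lemma right_end (hfree : G.CliqueFree 5) (hdeg : ∀ v, (nb G v).card ≤ 5)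
    {C : Finset (Finset V)} (hC : Comp G 4 C)
    {m : ℕ} {X : ℕ → Finset V} (hm3 : 3 ≤ m) (h : Chain G m X) (h0 : X 0 ∪ X 1 ∈ C)
    (hmax : ∀ Y', Chain G (m+1) Y' → Y' 0 ∪ Y' 1 ∉ C) :
    (∀ Z, G.IsNClique 4 Z → Meet Z (X m) → Z = X (m-1) ∪ X m) ∨ G.IsNClique 4 (X m ∪ X 0) := by
  by_contra hcon
  push Not at hcon
  obtain ⟨⟨Z, hZ, hZm, hZne⟩, hnc⟩ := hcon
  have hintr : ∀ i, 0 < i → i < m → Disjoint Z (X i) := by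
    intro i hi0 him
    rw [Finset.disjoint_left]
    intro x hxZ hxi
    obtain ⟨i', rfl⟩ : ∃ i', i = i' + 1 := ⟨i - 1, by omega⟩
    obtain ⟨y, hyZ, hym⟩ := hZm
    rcases h.clq_eq hdeg hm3 (i := i') (by omega) hZ ⟨x, hxZ, hxi⟩ with e | e
    · rw [e, Finset.mem_union] at hyZ
      rcases hyZ with hy | hy
      · exact Finset.disjoint_left.1 (h.disj _ (by omega) _ (by omega) (by omega)) hy hym
      · exact Finset.disjoint_left.1 (h.disj _ (by omega) _ (by omega) (by omega)) hy hym
    · by_cases hi2 : i' + 2 = m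
      · apply hZne
        rw [e, ← hi2]; rfl
      · rw [e, Finset.mem_union] at hyZ
        rcases hyZ with hy | hy
        · exact Finset.disjoint_left.1 (h.disj _ (by omega) _ (by omega) (by omega)) hy hym
        · exact Finset.disjoint_left.1 (h.disj _ (by omega) _ (by omega) (by omega)) hy hym
  -- a pair that is met at an end is contained
  have hend : ∀ A B : Finset V, A.card = 2 → Disjoint Z B → G.IsNClique 4 (A ∪ B) → Meet Z A →
      A ⊆ Z := by
    intro A B hA hB hc hm
    have := card_meet (t := 4) hfree hdeg hZ hc (by
      obtain ⟨x, h1, h2⟩ := hm; exact ⟨x, h1, by simp [h2]⟩)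
    have e : Z ∩ (A ∪ B) = Z ∩ A := by
      rw [Finset.inter_union_distrib_left, Finset.disjoint_iff_inter_eq_empty.1 hB,
        Finset.union_empty]
    rw [e] at this
    have : Z ∩ A = A := Finset.eq_of_subset_of_card_le Finset.inter_subset_right (by omega)
    rw [← this]; exact Finset.inter_subset_left
  have hXm : X m ⊆ Z := by
    apply hend (X m) (X (m-1)) (h.card _ le_rfl) (hintr _ (by omega) (by omega)) _ hZm
    have := h.clq (m-1) (by omega)
    rw [show m - 1 + 1 = m by omega, Finset.union_comm] at this
    exact this
  have hYc : (Z \ X m).card = 2 := by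
    rw [Finset.card_sdiff_of_subset hXm, hZ.card_eq, h.card _ le_rfl]
  by_cases hZ0 : Meet Z (X 0)
  · have hX0 : X 0 ⊆ Z := by
      apply hend (X 0) (X 1) (h.card _ (by omega)) (hintr _ (by omega) (by omega)) _ hZ0
      exact h.clq 0 (by omega)
    apply hnc
    have : X m ∪ X 0 = Z := by
      apply Finset.eq_of_subset_of_card_le (Finset.union_subset hXm hX0)
      rw [Finset.card_union_of_disjoint (h.disj _ le_rfl _ (by omega) (by omega)), hZ.card_eq,
        h.card _ le_rfl, h.card _ (by omega)]
    rw [this]; exact hZ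
  · have hall : ∀ i ≤ m, Disjoint (Z \ X m) (X i) := by
      intro i hi
      by_cases hi0 : i = 0
      · subst hi0
        rw [Finset.disjoint_left]
        intro x hx hx'
        exact hZ0 ⟨x, (Finset.mem_sdiff.1 hx).1, hx'⟩
      · by_cases him : i = m
        · subst him; exact Finset.sdiff_disjoint
        · exact Disjoint.mono_left Finset.sdiff_subset (hintr i (by omega) (by omega))
    let X' : ℕ → Finset V := Function.update X (m+1) (Z \ X m)
    have hX'1 : X' (m+1) = Z \ X m := by simp [X']
    have hX'o : ∀ i ≤ m, X' i = X i := by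
      intro i hi
      have : i ≠ m + 1 := by omega
      simp [X', this]
    apply hmax X'
    · refine ⟨?_, ?_, ?_⟩
      · intro i hi
        by_cases him : i = m + 1
        · subst him; rw [hX'1]; exact hYc
        · rw [hX'o i (by omega)]; exact h.card i (by omega)
      · intro i hi j hj hij
        by_cases him : i = m + 1
        · subst him
          rw [hX'1, hX'o j (by omega)]; exact hall j (by omega)
        · by_cases hjm : j = m + 1
          · subst hjm
            rw [hX'1, hX'o i (by omega)]; exact (hall i (by omega)).symm
          · rw [hX'o i (by omega), hX'o j (by omega)]
            exact h.disj i (by omega) j (by omega) hij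
      · intro i hi
        by_cases him : i = m
        · subst him
          rw [hX'1, hX'o i le_rfl, Finset.union_sdiff_of_subset hXm]
          exact hZ
        · rw [hX'o i (by omega), hX'o (i+1) (by omega)]
          exact h.clq i (by omega)
    · rw [hX'o 0 (by omega), hX'o 1 (by omega)]; exact h0

/-- the set of picks with given parity -/
noncomputable def picks (m b : ℕ) (y : ℕ → V) : Finset V :=
  ((Finset.range (m+1)).filter (fun i => i % 2 = b)).image y

lemma mem_picks {m b : ℕ} {y : ℕ → V} {v : V} :
    v ∈ picks m b y ↔ ∃ i ≤ m, i % 2 = b ∧ y i = v := by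
  simp [picks, and_assoc, Nat.lt_succ_iff]

lemma picks_indep (hdeg : ∀ v, (nb G v).card ≤ 5) {m b : ℕ} {X : ℕ → Finset V}
    (h : Chain G m X) {y : ℕ → V} (hy : ∀ i ≤ m, y i ∈ X i)
    (hb : ¬ (b = 0 ∧ m % 2 = b)) :
    ∀ x ∈ picks m b y, ∀ z ∈ picks m b y, ¬ G.Adj x z := by
  have key : ∀ i j, 0 < i → i < m → j ≤ m → i % 2 = b → j % 2 = b → ¬ G.Adj (y i) (y j) := by
    intro i j hi him hj hib hjb hadj
    obtain ⟨i', rfl⟩ : ∃ i', i = i' + 1 := ⟨i - 1, by omega⟩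
    have h1 := h.nb_eq hdeg (i := i') (by omega) (hy (i'+1) (by omega))
    have h2 : y j ∈ insert (y (i'+1)) (nb G (y (i'+1))) := by simp [mem_nb, hadj]
    rw [h1] at h2
    by_cases hij : i' + 1 = j
    · subst hij; exact hadj.ne rfl
    · have hyj := hy j hj
      simp only [Finset.mem_union] at h2
      rcases h2 with (h2 | h2) | h2
      · exact Finset.disjoint_left.1 (h.disj i' (by omega) j hj (by omega)) h2 hyj
      · exact Finset.disjoint_left.1 (h.disj (i'+1) (by omega) j hj (by omega)) h2 hyj
      · exact Finset.disjoint_left.1 (h.disj (i'+2) (by omega) j hj (by omega)) h2 hyj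
  intro x hx z hz hadj
  obtain ⟨i, hi, hib, rfl⟩ := mem_picks.1 hx
  obtain ⟨j, hj, hjb, rfl⟩ := mem_picks.1 hz
  by_cases hii : 0 < i ∧ i < m
  · exact key i j hii.1 hii.2 hj hib hjb hadj
  · by_cases hjj : 0 < j ∧ j < m
    · exact key j i hjj.1 hjj.2 hi hjb hib hadj.symm
    · by_cases hij : i = j
      · subst hij; exact hadj.ne rfl
      · apply hb
        rcases Nat.eq_zero_or_pos i with h0 | h0
        · subst h0
          have : j = m := by omega
          subst this; exact ⟨by omega, hjb⟩
        · have : i = m := by omega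
          subst this
          have : j = 0 := by omega
          subst this; exact ⟨by omega, hib⟩

lemma picks_hit {m b : ℕ} (hb : b < 2) {X : ℕ → Finset V} {y : ℕ → V} (hy : ∀ i ≤ m, y i ∈ X i)
    {i : ℕ} (hi : i < m) : ∃ x ∈ X i ∪ X (i+1), x ∈ picks m b y := by
  by_cases h : i % 2 = b
  · exact ⟨y i, by simp [hy i (by omega)], mem_picks.2 ⟨i, by omega, h, rfl⟩⟩
  · exact ⟨y (i+1), by simp [hy (i+1) (by omega)], mem_picks.2 ⟨i+1, by omega, by omega, rfl⟩⟩

/-- The bad configuration. -/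
def Bad (G : SimpleGraph V) : Prop :=
  ∃ m X, 4 ≤ m ∧ m % 2 = 0 ∧ Chain G m X ∧ G.IsNClique 4 (X m ∪ X 0)

lemma chain_data (hfree : G.CliqueFree 5) (hdeg : ∀ v, (nb G v).card ≤ 5)
    {C : Finset (Finset V)} (hC : Comp G 4 C)
    {Q1 Q2 Q3 : Finset V} (h1 : Q1 ∈ C) (h2 : Q2 ∈ C) (h3 : Q3 ∈ C) (m12 : Meet Q1 Q2)
    (m23 : Meet Q2 Q3) (m13 : ¬ Meet Q1 Q3) (hbad : ¬ Bad G) : ClassData G C := by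
  have c1 := hC.clq _ h1
  have c2 := hC.clq _ h2
  have c3 := hC.clq _ h3
  have a12 := card_meet (t := 4) hfree hdeg c1 c2 m12
  have a23 := card_meet (t := 4) hfree hdeg c2 c3 m23
  have d13 : Disjoint Q1 Q3 := by
    rw [Finset.disjoint_left]; intro x hx hx'; exact m13 ⟨x, hx, hx'⟩
  have dd : Disjoint (Q1 ∩ Q2) (Q2 ∩ Q3) :=
    Disjoint.mono Finset.inter_subset_left Finset.inter_subset_right d13
  have hsub : (Q1 ∩ Q2) ∪ (Q2 ∩ Q3) ⊆ Q2 :=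
    Finset.union_subset Finset.inter_subset_right Finset.inter_subset_left
  have hcu := Finset.card_union_of_disjoint dd
  have hcl := Finset.card_le_card hsub
  have q2 := c2.card_eq
  have q1 := c1.card_eq
  have q3 := c3.card_eq
  have hQ2 : (Q1 ∩ Q2) ∪ (Q2 ∩ Q3) = Q2 := Finset.eq_of_subset_of_card_le hsub (by omega)
  have hQ1 : (Q1 \ Q2) ∪ (Q1 ∩ Q2) = Q1 := Finset.sdiff_union_inter Q1 Q2
  have hQ3 : (Q2 ∩ Q3) ∪ (Q3 \ Q2) = Q3 := by
    rw [Finset.inter_comm, Finset.union_comm]; exact Finset.sdiff_union_inter Q3 Q2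
  have e1 := Finset.card_sdiff_add_card_inter Q1 Q2
  have e3 := Finset.card_sdiff_add_card_inter Q3 Q2
  rw [Finset.inter_comm Q3 Q2] at e3
  let X : ℕ → Finset V := fun i => if i = 0 then Q1 \ Q2 else if i = 1 then Q1 ∩ Q2 else
    if i = 2 then Q2 ∩ Q3 else Q3 \ Q2
  have hX : Chain G 3 X := by
    refine ⟨?_, ?_, ?_⟩
    · intro i hi
      interval_cases i <;> simp [X] <;> omega
    · have D01 : Disjoint (Q1 \ Q2) (Q1 ∩ Q2) :=
        Disjoint.mono_right Finset.inter_subset_right Finset.sdiff_disjoint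
      have D02 : Disjoint (Q1 \ Q2) (Q2 ∩ Q3) :=
        Disjoint.mono_right Finset.inter_subset_left Finset.sdiff_disjoint
      have D03 : Disjoint (Q1 \ Q2) (Q3 \ Q2) :=
        Disjoint.mono Finset.sdiff_subset Finset.sdiff_subset d13
      have D13 : Disjoint (Q1 ∩ Q2) (Q3 \ Q2) :=
        Disjoint.mono Finset.inter_subset_left Finset.sdiff_subset d13
      have D23 : Disjoint (Q2 ∩ Q3) (Q3 \ Q2) :=
        Disjoint.mono_left Finset.inter_subset_left Finset.disjoint_sdiff
      intro i hi j hj hij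
      interval_cases i <;> interval_cases j <;> first | exact absurd rfl hij | skip
      all_goals simp only [X, if_true, if_false, one_ne_zero, OfNat.ofNat_ne_zero,
        OfNat.ofNat_ne_one, OfNat.zero_ne_ofNat, OfNat.one_ne_ofNat, zero_ne_one]
      all_goals first | assumption | (apply Disjoint.symm; assumption) | skip
      all_goals first | exact D23 | exact D23.symm | exact D13 | exact D13.symm | exact D03 | exact D03.symm
    · intro i hi
      interval_cases i
      · simpa [X, hQ1] using c1
      · simpa [X, hQ2] using c2
      · simpa [X, hQ3] using c3
  have hX0 : X 0 ∪ X 1 ∈ C := by simpa [X, hQ1] using h1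
  clear_value X
  obtain ⟨m, Y, hm3, hY, hY0, hmax⟩ := exists_max_chain C hX hX0
  have hYC := hY.mem_comp hC hY0
  have hYU : ∀ i ≤ m, Y i ⊆ uni C := by
    intro i hi x hx
    by_cases him : i = m
    · exact mem_uni.2 ⟨_, hYC (m-1) (by omega), by
        rw [show m - 1 + 1 = m by omega, ← him]; simp [hx]⟩
    · exact mem_uni.2 ⟨_, hYC i (by omega), by simp [hx]⟩
  have hyex : ∀ i, ∃ v, i ≤ m → v ∈ Y i := by
    intro i
    by_cases hi : i ≤ m
    · obtain ⟨x, hx⟩ := Finset.card_pos.1 (show 0 < (Y i).card by rw [hY.card _ hi]; omega)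
      exact ⟨x, fun _ => hx⟩
    · obtain ⟨x, hx⟩ := Finset.card_pos.1 (show 0 < (Y 0).card by rw [hY.card _ (by omega)]; omega)
      exact ⟨x, fun h => (hi h).elim⟩
  choose y hy using hyex
  have hnbU : ∀ i, 0 < i → i < m → ∀ v ∈ Y i, nb G v ⊆ uni C := by
    intro i hi him v hv
    obtain ⟨i', rfl⟩ : ∃ i', i = i' + 1 := ⟨i - 1, by omega⟩
    have h1 := hY.nb_eq hdeg (i := i') (by omega) hv
    intro x hx
    have : x ∈ insert v (nb G v) := by simp [hx]
    rw [h1] at this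
    simp only [Finset.mem_union] at this
    rcases this with (h | h) | h
    · exact hYU _ (by omega) h
    · exact hYU _ (by omega) h
    · exact hYU _ (by omega) h
  by_cases hcl : G.IsNClique 4 (Y m ∪ Y 0)
  · -- closed
    have hodd : m % 2 = 1 := by
      by_contra hpar
      exact hbad ⟨m, Y, by omega, by omega, hY, hcl⟩
    have dj := fun i (hi : i ≤ m) j (hj : j ≤ m) (hij : i ≠ j) => hY.disj i hi j hj hij
    have hallZ : ∀ Z ∈ C, (∃ i < m, Z = Y i ∪ Y (i+1)) ∨ Z = Y m ∪ Y 0 := by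
      have ends0 : ∀ Z, G.IsNClique 4 Z → Meet Z (Y 0) → Z = Y m ∪ Y 0 ∨ Z = Y 0 ∪ Y 1 := by
        intro Z hZ hm
        exact local_clq hdeg (hY.card m (by omega)) (hY.card 0 (by omega)) (hY.card 1 (by omega))
          (hY.card 2 (by omega))
          (dj _ (by omega) _ (by omega) (by omega)) (dj _ (by omega) _ (by omega) (by omega))
          (dj _ (by omega) _ (by omega) (by omega)) (dj _ (by omega) _ (by omega) (by omega))
          (dj _ (by omega) _ (by omega) (by omega)) (dj _ (by omega) _ (by omega) (by omega))
          hcl (hY.clq 0 (by omega)) (hY.clq 1 (by omega)) hZ hm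
      have endsm : ∀ Z, G.IsNClique 4 Z → Meet Z (Y m) → Z = Y (m-1) ∪ Y m ∨ Z = Y m ∪ Y 0 := by
        intro Z hZ hm
        exact local_clq hdeg (hY.card (m-1) (by omega)) (hY.card m (by omega))
          (hY.card 0 (by omega)) (hY.card 1 (by omega))
          (dj _ (by omega) _ (by omega) (by omega)) (dj _ (by omega) _ (by omega) (by omega))
          (dj _ (by omega) _ (by omega) (by omega)) (dj _ (by omega) _ (by omega) (by omega))
          (dj _ (by omega) _ (by omega) (by omega)) (dj _ (by omega) _ (by omega) (by omega))
          (by have := hY.clq (m-1) (by omega)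
              rwa [show m - 1 + 1 = m by omega] at this) hcl (hY.clq 0 (by omega)) hZ hm
      have step : ∀ Z, G.IsNClique 4 Z → ∀ i ≤ m, Meet Z (Y i) →
          (∃ i < m, Z = Y i ∪ Y (i+1)) ∨ Z = Y m ∪ Y 0 := by
        intro Z hZ i hi hmi
        by_cases hi0 : i = 0
        · subst hi0
          rcases ends0 Z hZ hmi with h | h
          · exact Or.inr h
          · exact Or.inl ⟨0, by omega, h⟩
        by_cases him : i = m
        · subst him
          rcases endsm Z hZ hmi with h | h
          · exact Or.inl ⟨i-1, by omega, by rwa [show i - 1 + 1 = i by omega]⟩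
          · exact Or.inr h
        · obtain ⟨i', rfl⟩ : ∃ i', i = i' + 1 := ⟨i - 1, by omega⟩
          rcases hY.clq_eq hdeg hm3 (i := i') (by omega) hZ hmi with e | e
          · exact Or.inl ⟨i', by omega, e⟩
          · exact Or.inl ⟨i'+1, by omega, e⟩
      apply hC.conn _ hY0
      · exact Or.inl ⟨0, by omega, rfl⟩
      · intro Z1 hZ1 Z2 hZ2 hp ⟨x, hx1, hx2⟩
        have hZ2c := hC.clq _ hZ2
        rcases hp with ⟨i, hi, rfl⟩ | rfl
        · rcases Finset.mem_union.1 hx1 with h | h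
          · exact step Z2 hZ2c i (by omega) ⟨x, hx2, h⟩
          · exact step Z2 hZ2c (i+1) (by omega) ⟨x, hx2, h⟩
        · rcases Finset.mem_union.1 hx1 with h | h
          · exact step Z2 hZ2c m (by omega) ⟨x, hx2, h⟩
          · exact step Z2 hZ2c 0 (by omega) ⟨x, hx2, h⟩
    refine ⟨{y 0}, fun _ => picks m 0 y, ?_, Or.inl ⟨y 0, by simp, ?_⟩⟩
    · intro o ho
      simp at ho
      subst ho
      refine ⟨mem_picks.2 ⟨0, by omega, rfl, rfl⟩, ?_, ?_, ?_, ?_⟩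
      · intro x hx
        obtain ⟨i, hi, _, rfl⟩ := mem_picks.1 hx
        exact hYU i hi (hy i hi)
      · exact picks_indep hdeg hY hy (by omega)
      · intro Q hQ
        rcases hallZ Q hQ with ⟨i, hi, rfl⟩ | rfl
        · exact picks_hit (by omega) hy hi
        · exact ⟨y 0, by simp [hy 0 (by omega)], mem_picks.2 ⟨0, by omega, rfl, rfl⟩⟩
      · intro j hj hjo
        obtain ⟨i, hi, hib, rfl⟩ := mem_picks.1 hj
        have hi0 : i ≠ 0 := by rintro rfl; exact hjo rfl
        exact hnbU i (by omega) (by omega) _ (hy i hi)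
    · have := local_nb hdeg (hY.card m (by omega)) (hY.card 0 (by omega)) (hY.card 1 (by omega))
        (dj _ (by omega) _ (by omega) (by omega)) (dj _ (by omega) _ (by omega) (by omega))
        (dj _ (by omega) _ (by omega) (by omega)) hcl (hY.clq 0 (by omega)) (hy 0 (by omega))
      intro x hx
      have hx' : x ∈ insert (y 0) (nb G (y 0)) := by simp [hx]
      rw [this] at hx'
      simp only [Finset.mem_union] at hx'
      rcases hx' with (h | h) | h
      · exact hYU _ (by omega) h
      · exact hYU _ (by omega) h
      · exact hYU _ (by omega) h
  · -- open
    have hR : ∀ Z, G.IsNClique 4 Z → Meet Z (Y m) → Z = Y (m-1) ∪ Y m := by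
      rcases right_end hfree hdeg hC hm3 hY hY0 hmax with h | h
      · exact h
      · exact (hcl h).elim
    have hL : ∀ Z, G.IsNClique 4 Z → Meet Z (Y 0) → Z = Y 0 ∪ Y 1 := by
      have := right_end hfree hdeg hC hm3 hY.rev (by
        have := hYC (m-1) (by omega)
        rw [show m - 1 + 1 = m by omega, Finset.union_comm] at this
        simpa using this) hmax
      rcases this with h | h
      · intro Z hZ hm
        have := h Z hZ (by simpa using hm)
        rw [this, Finset.union_comm]
        simp only [Nat.sub_self]
        rw [show m - (m - 1) = 1 by omega]
      · exfalso
        apply hcl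
        rw [Finset.union_comm]
        simpa using h
    have hallZ : ∀ Z ∈ C, (∃ i < m, Z = Y i ∪ Y (i+1)) := by
      have step : ∀ Z, G.IsNClique 4 Z → ∀ i ≤ m, Meet Z (Y i) →
          (∃ i < m, Z = Y i ∪ Y (i+1)) := by
        intro Z hZ i hi hmi
        by_cases hi0 : i = 0
        · subst hi0
          exact ⟨0, by omega, hL Z hZ hmi⟩
        by_cases him : i = m
        · subst him
          exact ⟨i-1, by omega, by rw [show i - 1 + 1 = i by omega]; exact hR Z hZ hmi⟩
        · obtain ⟨i', rfl⟩ : ∃ i', i = i' + 1 := ⟨i - 1, by omega⟩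
          rcases hY.clq_eq hdeg hm3 (i := i') (by omega) hZ hmi with e | e
          · exact ⟨i', by omega, e⟩
          · exact ⟨i'+1, by omega, e⟩
      apply hC.conn _ hY0
      · exact ⟨0, by omega, rfl⟩
      · intro Z1 hZ1 Z2 hZ2 hp ⟨x, hx1, hx2⟩
        have hZ2c := hC.clq _ hZ2
        obtain ⟨i, hi, rfl⟩ := hp
        rcases Finset.mem_union.1 hx1 with h | h
        · exact step Z2 hZ2c i (by omega) ⟨x, hx2, h⟩
        · exact step Z2 hZ2c (i+1) (by omega) ⟨x, hx2, h⟩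
    by_cases hpar : m % 2 = 0
    · refine ⟨{y 1}, fun _ => picks m 1 y, ?_, Or.inl ⟨y 1, by simp, ?_⟩⟩
      · intro o ho
        simp at ho
        subst ho
        refine ⟨mem_picks.2 ⟨1, by omega, rfl, rfl⟩, ?_, ?_, ?_, ?_⟩
        · intro x hx
          obtain ⟨i, hi, _, rfl⟩ := mem_picks.1 hx
          exact hYU i hi (hy i hi)
        · exact picks_indep hdeg hY hy (by omega)
        · intro Q hQ
          obtain ⟨i, hi, rfl⟩ := hallZ Q hQ
          exact picks_hit (by omega) hy hi
        · intro j hj hjo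
          obtain ⟨i, hi, hib, rfl⟩ := mem_picks.1 hj
          exact hnbU i (by omega) (by omega) _ (hy i hi)
      · exact hnbU 1 (by omega) (by omega) _ (hy 1 (by omega))
    · have D0m := hY.disj 0 (by omega) m le_rfl (by omega)
      refine ⟨Y 0 ∪ Y m, fun o => if o ∈ Y 0 then picks m 0 (Function.update y 0 o)
        else picks m 1 (Function.update y m o), ?_, Or.inr (Or.inl ⟨?_, ?_⟩)⟩
      · have gen : ∀ e b o, e ≤ m → o ∈ Y e → e % 2 = b → b < 2 → (e = 0 ∨ e = m) → 
            (o ∈ picks m b (Function.update y e o) ∧ picks m b (Function.update y e o) ⊆ uni C ∧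
            (∀ x ∈ picks m b (Function.update y e o), ∀ z ∈ picks m b (Function.update y e o),
              ¬ G.Adj x z) ∧
            (∀ Q ∈ C, ∃ x ∈ Q, x ∈ picks m b (Function.update y e o)) ∧
            ∀ j ∈ picks m b (Function.update y e o), j ≠ o → nb G j ⊆ uni C) := by
          intro e b o he ho heb hb2 hem
          have hy' : ∀ i ≤ m, Function.update y e o i ∈ Y i := by
            intro i hi
            by_cases h : i = e
            · subst h; simpa using ho
            · simpa [h] using hy i hi
          refine ⟨mem_picks.2 ⟨e, he, heb, by simp⟩, ?_, ?_, ?_, ?_⟩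
          · intro x hx
            obtain ⟨i, hi, _, rfl⟩ := mem_picks.1 hx
            exact hYU i hi (hy' i hi)
          · exact picks_indep hdeg hY hy' (by omega)
          · intro Q hQ
            obtain ⟨i, hi, rfl⟩ := hallZ Q hQ
            exact picks_hit hb2 hy' hi
          · intro j hj hjo
            obtain ⟨i, hi, hib, rfl⟩ := mem_picks.1 hj
            have hie : i ≠ e := by rintro rfl; simp at hjo
            exact hnbU i (by omega) (by omega) _ (hy' i hi)
        intro o ho
        by_cases h0 : o ∈ Y 0
        · simp only [h0, if_true]
          exact gen 0 0 o (by omega) h0 rfl (by omega) (Or.inl rfl)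
        · simp only [h0, if_false]
          rcases Finset.mem_union.1 ho with h | h
          · exact (h0 h).elim
          · exact gen m 1 o (by omega) h (by omega) (by omega) (Or.inr rfl)
      · rw [Finset.card_union_of_disjoint D0m, hY.card _ (by omega), hY.card _ le_rfl]
      · have gen : ∀ Q ∈ C, ∀ o ∈ Q, (nb G o \ uni C).card ≤ 2 := by
          intro Q hQ o ho
          have hQc := hC.clq Q hQ
          have hs : (nb G o \ uni C) ∪ Q ⊆ insert o (nb G o) := by
            apply Finset.union_subset
            · exact (Finset.sdiff_subset).trans (Finset.subset_insert _ _)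
            · exact clique_sub_nb hQc.isClique ho
          have hd : Disjoint (nb G o \ uni C) Q :=
            Disjoint.mono_right (fun x hx => mem_uni.2 ⟨Q, hQ, hx⟩) Finset.sdiff_disjoint
          have := Finset.card_le_card hs
          rw [Finset.card_union_of_disjoint hd, Finset.card_insert_of_notMem (not_self_nb o),
            hQc.card_eq] at this
          have := hdeg o
          omega
        intro o ho
        obtain ⟨Q, hQ, hoQ⟩ : ∃ Q ∈ C, o ∈ Q := by
          have : o ∈ uni C := by
            rcases Finset.mem_union.1 ho with h | h
            · exact hYU 0 (by omega) h
            · exact hYU m le_rfl h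
          exact mem_uni.1 this
        exact gen Q hQ o hoQ

theorem hit4 [Nonempty V] (hfree : G.CliqueFree 5) (hdeg : ∀ v, (nb G v).card ≤ 5)
    (hbad : ¬ Bad G) :
    ∃ J : Finset V, (∀ x ∈ J, ∀ y ∈ J, ¬ G.Adj x y) ∧
      ∀ Q, G.IsNClique 4 Q → ∃ x ∈ Q, x ∈ J := by
  apply hit_of_data G 4 (by omega)
  intro C hC
  by_cases htr : ∃ Q1 ∈ C, ∃ Q2 ∈ C, ∃ Q3 ∈ C, Meet Q1 Q2 ∧ Meet Q2 Q3 ∧ ¬ Meet Q1 Q3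
  · obtain ⟨Q1, h1, Q2, h2, Q3, h3, m12, m23, m13⟩ := htr
    exact chain_data hfree hdeg hC h1 h2 h3 m12 m23 m13 hbad
  · push Not at htr
    apply core_data (t := 4) le_rfl hfree hdeg C hC.ne hC.clq
    intro Q hQ
    apply hC.conn Q hQ (fun Z => Meet Q Z)
    · have := (hC.clq Q hQ).card_eq
      obtain ⟨x, hx⟩ := Finset.card_pos.1 (show 0 < Q.card by omega)
      exact ⟨x, hx, hx⟩
    · intro Q1 h1 Q2 h2 hm1 hm2
      exact htr Q hQ Q1 h1 Q2 h2 hm1 hm2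

end
end BK


namespace BK
open Finset Classical

/-- a coloring with two independent classes and a class without 4-cliques -/
def Good {V : Type*} (G : SimpleGraph V) (g : V → Option Bool) : Prop :=
  (∀ u v, G.Adj u v → g u = g v → g u = none) ∧ ∀ Q, G.IsNClique 4 Q → ∃ x ∈ Q, g x ≠ none

/-- closed odd ring of pairs, periodic indexing -/
structure Ring4 {V : Type*} (G : SimpleGraph V) (n : ℕ) (Y : ℕ → Finset V) (w : V → V) : Prop where
  h5 : 5 ≤ n
  odd : n % 2 = 1
  per : ∀ i, Y (i + n) = Y i
  card : ∀ i, (Y i).card = 2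
  disj : ∀ i j, i < j → j < i + n → Disjoint (Y i) (Y j)
  out : ∀ i v, v ∈ Y i → ∀ k, w v ∉ Y k
  adj : ∀ i v, v ∈ Y i → G.Adj v (w v)
  nbs : ∀ i v, v ∈ Y (i+1) → ∀ x, G.Adj v x → x ∈ Y i ∪ Y (i+1) ∪ Y (i+2) ∨ x = w v

section
variable {V : Type*} {G : SimpleGraph V} {n : ℕ} {Y : ℕ → Finset V} {w : V → V}

lemma Ring4.shift (R : Ring4 G n Y w) (s : ℕ) : Ring4 G n (fun i => Y (i + s)) w where
  h5 := R.h5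
  odd := R.odd
  per i := by
    have := R.per (i + s)
    rwa [show i + s + n = i + n + s by omega] at this
  card i := R.card _
  disj i j h1 h2 := R.disj _ _ (by omega) (by omega)
  out i v hv k := R.out _ v hv _
  adj i v hv := R.adj _ v hv
  nbs i v hv x hx := by
    have := R.nbs (i + s) v (by rwa [show i + s + 1 = i + 1 + s by omega]) x hx
    rwa [show i + s + 1 = i + 1 + s by omega, show i + s + 2 = i + 2 + s by omega] at this

lemma Ring4.per_mul (R : Ring4 G n Y w) (i k : ℕ) : Y (i + k * n) = Y i := by
  induction k with
  | zero => simp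
  | succ k ih => rw [Nat.succ_mul, ← add_assoc, R.per, ih]

lemma Ring4.per_mod (R : Ring4 G n Y w) (i : ℕ) : Y (i % n) = Y i := by
  conv_rhs => rw [← Nat.mod_add_div i n, mul_comm]
  rw [R.per_mul]

lemma Ring4.per_mod_add (R : Ring4 G n Y w) (i k : ℕ) : Y (i % n + k) = Y (i + k) := by
  conv_rhs => rw [← Nat.mod_add_div i n, mul_comm, add_right_comm]
  rw [R.per_mul]

lemma Ring4.uniq (R : Ring4 G n Y w) {i j : ℕ} {v : V} (hi : i < n) (hj : j < n) (h1 : v ∈ Y i)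
    (h2 : v ∈ Y j) : i = j := by
  by_contra h
  rcases Nat.lt_or_gt_of_ne h with h | h
  · exact Finset.disjoint_left.1 (R.disj i j h (by omega)) h1 h2
  · exact Finset.disjoint_left.1 (R.disj j i h (by omega)) h2 h1

/-- every index can be written as `i+1` with `i` arbitrary -/
lemma Ring4.pred (R : Ring4 G n Y w) (k : ℕ) : ∃ i, Y k = Y (i + 1) ∧ ∀ j, Y (k + j) = Y (i + 1 + j) := by
  have := R.h5
  refine ⟨k + n - 1, ?_, fun j => ?_⟩
  · rw [show k + n - 1 + 1 = k + n by omega, R.per]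
  · rw [show k + n - 1 + 1 + j = k + j + n by omega, R.per]

/-- cliques inside the ring lie in two consecutive pairs -/
lemma Ring4.clique (R : Ring4 G n Y w) {T : Finset V} (hT : G.IsClique (T : Set V))
    (hF : ∀ v ∈ T, ∃ i, v ∈ Y i) (hne : T.Nonempty) : ∃ i, T ⊆ Y i ∪ Y (i+1) := by
  have h5 := R.h5
  obtain ⟨v, hv⟩ := hne
  obtain ⟨k, hk⟩ := hF v hv
  obtain ⟨i, hi, -⟩ := R.pred k
  obtain ⟨i', hi', hi''⟩ := R.pred i
  rw [hi, hi''] at hk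
  have key : ∀ k, ∀ a ∈ T, a ∈ Y (k+1) → T ⊆ Y k ∪ Y (k+1) ∪ Y (k+2) := by
    intro k a ha hak x hx
    by_cases hxa : a = x
    · subst hxa; simp [hak]
    rcases R.nbs k a hak x (hT ha hx hxa) with h | h
    · exact h
    · obtain ⟨l, hl⟩ := hF x hx
      exact (R.out _ a hak l (h ▸ hl)).elim
  have h1 := key (i'+1) v hv hk
  by_cases h : ∃ a ∈ T, a ∈ Y (i'+1)
  · obtain ⟨a, ha, hai⟩ := h
    have h2 := key i' a ha hai
    refine ⟨i'+1, fun x hx => ?_⟩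
    have a1 := h1 hx
    have a2 := h2 hx
    have d1 := R.disj (i') (i'+3) (by omega) (by omega)
    have d2 := R.disj (i'+1) (i'+3) (by omega) (by omega)
    have d3 := R.disj (i'+2) (i'+3) (by omega) (by omega)
    rw [Finset.disjoint_left] at d1 d2 d3
    simp only [Finset.mem_union] at a1 a2 ⊢
    rcases a1 with (b | b) | b
    · exact Or.inl b
    · exact Or.inr b
    · rcases a2 with (c | c) | c
      · exact (d1 c b).elim
      · exact (d2 c b).elim
      · exact (d3 c b).elim
  · push Not at h
    refine ⟨i'+2, fun x hx => ?_⟩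
    have a1 := h1 hx
    simp only [Finset.mem_union] at a1 ⊢
    rcases a1 with (b | b) | b
    · exact (h x hx b).elim
    · exact Or.inl b
    · exact Or.inr b

/-- coloring good outside of the ring -/
structure Off (G : SimpleGraph V) (Y : ℕ → Finset V) (f : V → Option Bool) : Prop where
  prop : ∀ u v, (∀ i, u ∉ Y i) → (∀ i, v ∉ Y i) → G.Adj u v → f u = f v → f u = none
  clq : ∀ Q, G.IsNClique 4 Q → (∀ v ∈ Q, ∀ i, v ∉ Y i) → ∃ x ∈ Q, f x ≠ none

lemma Off.shift {f : V → Option Bool} (R : Ring4 G n Y w) (h : Off G Y f) (s : ℕ) :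
    Off G (fun i => Y (i + s)) f := by
  have h5 := R.h5
  have key : ∀ v, (∀ i, v ∉ Y (i + s)) → ∀ i, v ∉ Y i := by
    intro v hv i
    have := hv (i + s * n - s)
    have e : s ≤ s * n := Nat.le_mul_of_pos_right _ (by omega)
    rwa [show i + s * n - s + s = i + s * n by omega, R.per_mul] at this
  exact ⟨fun u v hu hv => h.prop u v (key u hu) (key v hv),
    fun Q hQ hQ' => h.clq Q hQ fun v hv => key v (hQ' v hv)⟩

lemma good_of_check (R : Ring4 G n Y w) {f g : V → Option Bool} (hf : Off G Y f)
    (hg : ∀ v, (∀ i, v ∉ Y i) → g v = f v)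
    (ha : ∀ i < n, ∀ v ∈ Y i, g v = none ∨ g v ≠ f (w v))
    (hb1 : ∀ i < n, ∀ u ∈ Y i, ∀ v ∈ Y i, u ≠ v → g u = g v → g u = none)
    (hb2 : ∀ i < n, ∀ u ∈ Y i, ∀ v ∈ Y (i+1), g u = g v → g u = none)
    (hc : ∀ i < n, ∃ v ∈ Y i ∪ Y (i+1), g v ≠ none)
    (hd : ∀ i < n, ∀ x, f x = none → ∃ v ∈ Y i ∪ Y (i+1), ∃ v' ∈ Y i ∪ Y (i+1), v ≠ v' ∧
      (g v ≠ none ∨ w v ≠ x) ∧ (g v' ≠ none ∨ w v' ≠ x)) : Good G g := by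
  have h5 := R.h5
  have hn : 0 < n := by omega
  have ha' : ∀ i, ∀ v ∈ Y i, g v = none ∨ g v ≠ f (w v) := fun i v hv =>
    ha (i % n) (Nat.mod_lt _ hn) v (by rwa [R.per_mod])
  have hb1' : ∀ i, ∀ u ∈ Y i, ∀ v ∈ Y i, u ≠ v → g u = g v → g u = none := by
    intro i u hu v hv
    exact hb1 (i % n) (Nat.mod_lt _ hn) u (by rwa [R.per_mod]) v (by rwa [R.per_mod])
  have hb2' : ∀ i, ∀ u ∈ Y i, ∀ v ∈ Y (i+1), g u = g v → g u = none := by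
    intro i u hu v hv
    exact hb2 (i % n) (Nat.mod_lt _ hn) u (by rwa [R.per_mod]) v (by rwa [R.per_mod_add])
  have hc' : ∀ i, ∃ v ∈ Y i ∪ Y (i+1), g v ≠ none := by
    intro i
    have := hc (i % n) (Nat.mod_lt _ hn)
    rwa [R.per_mod, R.per_mod_add] at this
  have hd' : ∀ i, ∀ x, f x = none → ∃ v ∈ Y i ∪ Y (i+1), ∃ v' ∈ Y i ∪ Y (i+1), v ≠ v' ∧
      (g v ≠ none ∨ w v ≠ x) ∧ (g v' ≠ none ∨ w v' ≠ x) := by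
    intro i
    have := hd (i % n) (Nat.mod_lt _ hn)
    rwa [R.per_mod, R.per_mod_add] at this
  have hin : ∀ i u v, u ∈ Y i → G.Adj u v → g u = g v → g u = none := by
    intro i u v hu huv he
    obtain ⟨k, hk, -⟩ := R.pred i
    have hu' := hu
    rw [hk] at hu'
    rcases R.nbs k u hu' v huv with h | h
    · simp only [Finset.mem_union] at h
      rcases h with (h | h) | h
      · rw [he]; exact hb2' k v h u hu' he.symm
      · exact hb1' _ u hu' v h huv.ne he
      · exact hb2' _ u hu' v h he
    · subst h
      rcases ha' i u hu with h | h
      · exact h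
      · exact (h (he.trans (hg _ (R.out i u hu)))).elim
  refine ⟨fun u v huv he => ?_, fun Q hQ => ?_⟩
  · by_cases hu : ∃ i, u ∈ Y i
    · obtain ⟨i, hi⟩ := hu; exact hin i u v hi huv he
    by_cases hv : ∃ i, v ∈ Y i
    · obtain ⟨i, hi⟩ := hv; rw [he]; exact hin i v u hi huv.symm he.symm
    push Not at hu hv
    rw [hg u hu]
    rw [hg u hu, hg v hv] at he
    exact hf.prop u v hu hv huv he
  · by_contra hcon
    push Not at hcon
    by_cases hF : ∃ v ∈ Q, ∃ i, v ∈ Y i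
    · set T := Q.filter (fun v => ∃ i, v ∈ Y i) with hT
      have hTQ : T ⊆ Q := Finset.filter_subset _ _
      have hTne : T.Nonempty := by
        obtain ⟨v, hv, hi⟩ := hF; exact ⟨v, by simp [hT, hv, hi]⟩
      obtain ⟨i, hi⟩ := R.clique (T := T)
        (hQ.isClique.subset (by exact_mod_cast hTQ))
        (fun v hv => (Finset.mem_filter.1 hv).2) hTne
      have hcard : (Y i ∪ Y (i+1)).card = 4 := by
        rw [Finset.card_union_of_disjoint (R.disj i (i+1) (by omega) (by omega)), R.card, R.card]
      by_cases hx : ∃ x ∈ Q, ∀ i, x ∉ Y i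
      · obtain ⟨x, hxQ, hx⟩ := hx
        have hwx : ∀ v ∈ T, ∀ x ∈ Q, (∀ i, x ∉ Y i) → w v = x := by
          intro v hv x hxQ hx
          obtain ⟨hvQ, j, hj⟩ := Finset.mem_filter.1 hv
          obtain ⟨k, hk, -⟩ := R.pred j
          rw [hk] at hj
          have hne : v ≠ x := fun h => hx _ (h ▸ hj)
          rcases R.nbs k v hj x (hQ.isClique hvQ hxQ hne) with h | h
          · simp only [Finset.mem_union] at h
            rcases h with (h | h) | h <;> exact (hx _ h).elim
          · exact h.symm
        have hQe : Q ⊆ insert x T := by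
          intro z hz
          by_cases hzF : ∃ i, z ∈ Y i
          · simp [hT, hz, hzF]
          · push Not at hzF
            obtain ⟨v, hv⟩ := hTne
            rw [← hwx v hv z hz hzF, ← hwx v hv x hxQ hx]; simp
        have h3 : 3 ≤ T.card := by
          have := Finset.card_le_card hQe
          have h2 := Finset.card_insert_le x T
          rw [hQ.card_eq] at this; omega
        have hfx : f x = none := by rw [← hg x hx]; exact hcon x hxQ
        obtain ⟨v, hv, v', hv', hne, h1, h2⟩ := hd' i x hfx
        have nT : ∀ v, (g v ≠ none ∨ w v ≠ x) → v ∉ T := by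
          intro v h hvT
          rcases h with h | h
          · exact h (hcon v (hTQ hvT))
          · exact h (hwx v hvT x hxQ hx)
        have hsub : T ⊆ ((Y i ∪ Y (i+1)).erase v).erase v' := by
          intro z hz
          rw [Finset.mem_erase, Finset.mem_erase]
          exact ⟨fun h => nT _ h2 (h ▸ hz), fun h => nT _ h1 (h ▸ hz), hi hz⟩
        have := Finset.card_le_card hsub
        rw [Finset.card_erase_of_mem (by rw [Finset.mem_erase]; exact ⟨hne.symm, hv'⟩),
          Finset.card_erase_of_mem hv, hcard] at this
        omega
      · push Not at hx
        have hTe : Q = Y i ∪ Y (i+1) := by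
          apply Finset.eq_of_subset_of_card_le
          · intro z hz; exact hi (by simp [hT, hz, hx z hz])
          · rw [hcard, hQ.card_eq]
        obtain ⟨v, hv, h⟩ := hc' i
        exact h (hcon v (by rw [hTe]; exact hv))
    · push Not at hF
      obtain ⟨x, hx, h⟩ := hf.clq Q hQ hF
      exact h (by rw [← hg x (hF x hx)]; exact hcon x hx)

/-- build a coloring from colors along the ring -/
lemma exists_glue (R : Ring4 G n Y w) (f : V → Option Bool) (col : ℕ → V → Option Bool)
    (hcol : ∀ v ∈ Y 0, col n v = col 0 v) :
    ∃ g : V → Option Bool, (∀ v, (∀ i, v ∉ Y i) → g v = f v) ∧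
      ∀ i ≤ n, ∀ v ∈ Y i, g v = col i v := by
  have h5 := R.h5
  refine ⟨fun v => if h : ∃ i < n, v ∈ Y i then col h.choose v else f v, ?_, ?_⟩
  · intro v hv
    apply dif_neg
    rintro ⟨i, -, hi⟩; exact hv i hi
  · have key : ∀ i < n, ∀ v ∈ Y i,
        (if h : ∃ i < n, v ∈ Y i then col h.choose v else f v) = col i v := by
      intro i hi v hv
      have h : ∃ i < n, v ∈ Y i := ⟨i, hi, hv⟩
      rw [dif_pos h, R.uniq h.choose_spec.1 hi h.choose_spec.2 hv]
    intro i hi v hv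
    rcases Nat.lt_or_eq_of_le hi with h | h
    · exact key i h v hv
    · subst h
      have h0 : v ∈ Y 0 := by have := R.per 0; rw [zero_add] at this; rwa [← this]
      rw [hcol v h0]
      exact key 0 (by omega) v h0
end
end BK


namespace BK
open Finset Classical

section
variable {V : Type*} {G : SimpleGraph V} {n : ℕ} {Y : ℕ → Finset V} {w : V → V}

lemma ring_single (R : Ring4 G n Y w) {f : V → Option Bool} (hf : Off G Y f)
    (σ : ℕ → Option Bool) (y : ℕ → V) (hy : ∀ i ≤ n, y i ∈ Y i) (hy0 : y n = y 0) (hσ0 : σ n = σ 0)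
    (ha : ∀ i < n, σ i = none ∨ σ i ≠ f (w (y i)))
    (hb : ∀ i < n, σ i = σ (i+1) → σ i = none)
    (hc : ∀ i < n, σ i ≠ none ∨ σ (i+1) ≠ none)
    (hd : ∀ i < n, ∀ x, f x = none → (σ i = none ∨ σ (i+1) = none) →
      ∃ v ∈ Y i ∪ Y (i+1), ∃ v' ∈ Y i ∪ Y (i+1), v ≠ v' ∧
      ((v = y i ∧ σ i ≠ none) ∨ (v = y (i+1) ∧ σ (i+1) ≠ none) ∨ w v ≠ x) ∧ w v' ≠ x) :
    ∃ g, Good G g := by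
  have h5 := R.h5
  obtain ⟨g, hg, hgc⟩ := exists_glue R f (fun i v => if v = y i then σ i else none)
    (by intro v _; simp [hy0, hσ0])
  have hgy : ∀ i ≤ n, g (y i) = σ i := by
    intro i hi; rw [hgc i hi _ (hy i hi)]; simp
  have hgn : ∀ i ≤ n, ∀ v ∈ Y i, g v ≠ none → v = y i := by
    intro i hi v hv h
    by_contra hne
    rw [hgc i hi v hv] at h
    simp [hne] at h
  refine ⟨g, good_of_check R hf hg ?_ ?_ ?_ ?_ ?_⟩
  · intro i hi v hv
    by_cases h : g v = none
    · exact Or.inl h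
    have := hgn i hi.le v hv h
    subst this
    rw [hgy i hi.le] at h ⊢
    exact ha i hi
  · intro i hi u hu v hv huv he
    by_contra h
    have h1 := hgn i hi.le u hu h
    have h2 := hgn i hi.le v hv (he ▸ h)
    exact huv (h1.trans h2.symm)
  · intro i hi u hu v hv he
    by_contra h
    have h1 := hgn i hi.le u hu h
    have h2 := hgn (i+1) hi v hv (he ▸ h)
    subst h1
    rw [h2, hgy i hi.le, hgy (i+1) hi] at he
    rw [hgy i hi.le] at h
    exact h (hb i hi he)
  · intro i hi
    rcases hc i hi with h | h
    · exact ⟨y i, by simp [hy i hi.le], by rwa [hgy i hi.le]⟩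
    · exact ⟨y (i+1), by simp [hy (i+1) hi], by rwa [hgy (i+1) hi]⟩
  · intro i hi x hx
    by_cases h : σ i = none ∨ σ (i+1) = none
    · obtain ⟨v, hv, v', hv', hne, h1, h2⟩ := hd i hi x hx h
      refine ⟨v, hv, v', hv', hne, ?_, Or.inr h2⟩
      rcases h1 with ⟨rfl, h⟩ | ⟨rfl, h⟩ | h
      · left; rwa [hgy i hi.le]
      · left; rwa [hgy (i+1) hi]
      · exact Or.inr h
    · push Not at h
      refine ⟨y i, by simp [hy i hi.le], y (i+1), by simp [hy (i+1) hi], ?_, ?_, ?_⟩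
      · intro he
        exact Finset.disjoint_left.1 (R.disj i (i+1) (by omega) (by omega)) (hy i hi.le)
          (he ▸ hy (i+1) hi)
      · left; rw [hgy i hi.le]; exact h.1
      · left; rw [hgy (i+1) hi]; exact h.2

/-- color `c` can be used on the set `B` -/
def Allow (f : V → Option Bool) (w : V → V) (B : Finset V) (c : Bool) : Prop :=
  ∃ v ∈ B, f (w v) ≠ some c

/-- greedy choice -/
noncomputable def greedy (f : V → Option Bool) (w : V → V) (Y : ℕ → Finset V) (r : Bool) :
    ℕ → Option Bool
  | 0 => some (!r)
  | (i+1) => if Allow f w (Y (i+2)) true ∧ greedy f w Y r i ≠ some true then some true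
      else if Allow f w (Y (i+2)) false ∧ greedy f w Y r i ≠ some false then some false else none

lemma ring_case1 (R : Ring4 G n Y w) {f : V → Option Bool} (hf : Off G Y f) (r : Bool)
    (h0 : ¬ Allow f w (Y 0) (!r)) (h1 : Allow f w (Y 1) (!r)) : ∃ g, Good G g := by
  have h5 := R.h5
  have hYn : Y n = Y 0 := by have := R.per 0; rwa [zero_add] at this
  set τ := greedy f w Y r with hτ
  have t0 : τ 0 = some (!r) := rfl
  have ts : ∀ i, τ (i+1) = if Allow f w (Y (i+2)) true ∧ τ i ≠ some true then some true
      else if Allow f w (Y (i+2)) false ∧ τ i ≠ some false then some false else none :=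
    fun i => rfl
  have hal : ∀ i c, τ i = some c → Allow f w (Y (i+1)) c := by
    intro i c h
    cases i with
    | zero => rw [t0] at h; simp only [Option.some.injEq] at h; subst h; exact h1
    | succ i =>
      rw [ts] at h
      split_ifs at h with a b
      · simp only [Option.some.injEq] at h; subst h; exact a.1
      · simp only [Option.some.injEq] at h; subst h; exact b.1
  have hdiff : ∀ i, τ i = τ (i+1) → τ i = none := by
    intro i h
    rw [ts] at h
    split_ifs at h with a b
    · exact (a.2 h).elim
    · exact (b.2 h).elim
    · exact h
  have hone : ∀ B : Finset V, B.card = 2 → Allow f w B true ∨ Allow f w B false := by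
    intro B hB
    obtain ⟨v, hv⟩ : B.Nonempty := by rw [← Finset.card_pos]; omega
    by_cases h : f (w v) = some true
    · right; exact ⟨v, hv, by simp [h]⟩
    · left; exact ⟨v, hv, h⟩
  have hnn : ∀ i, τ (i+1) = none → τ i ≠ none := by
    intro i h h'
    rw [ts] at h
    split_ifs at h with a b
    rw [h'] at a b
    simp at a b
    rcases hone _ (R.card (i+2)) with h | h
    · exact a h
    · exact b h
  have hfa : ∀ i, τ i = none → ∀ v ∈ Y (i+1), f (w v) ≠ none := by
    intro i h v hv hn
    cases i with
    | zero => rw [t0] at h; simp at h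
    | succ i =>
      rw [ts] at h
      have A : ∀ c, Allow f w (Y (i+2)) c := fun c => ⟨v, hv, by simp [hn]⟩
      split_ifs at h with a b
      simp only [A, true_and, ne_eq, not_not] at a b
      rw [a] at b; simp at b
  -- colors
  set σ : ℕ → Option Bool := fun i => if i = 0 then τ (n-1) else τ (i-1) with hσ
  have s0 : σ 0 = τ (n-1) := by simp [hσ]
  have sp : ∀ i, σ (i+1) = τ i := by intro i; simp [hσ]
  have spn : ∀ i, 1 ≤ i → σ i = τ (i-1) := by
    intro i hi; obtain ⟨j, rfl⟩ : ∃ j, i = j+1 := ⟨i-1, by omega⟩; rw [sp]; simp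
  have hal' : ∀ i ≤ n, ∀ c, σ i = some c → Allow f w (Y i) c := by
    intro i hi c h
    cases i with
    | zero =>
      rw [s0] at h
      have := hal _ _ h
      rwa [show n - 1 + 1 = n by omega, hYn] at this
    | succ i => rw [sp] at h; exact hal _ _ h
  have s0r : σ 0 = some r ∨ σ 0 = none := by
    cases h : σ 0 with
    | none => simp
    | some c =>
      left
      have := hal' 0 (by omega) c h
      by_cases hc : c = r
      · rw [hc]
      · have : c = !r := by cases c <;> cases r <;> simp_all
        subst this; exact (h0 (hal' 0 (by omega) _ h)).elim
  have hfa' : ∀ i ≤ n, σ i = none → ∀ v ∈ Y i, f (w v) ≠ none := by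
    intro i hi h
    cases i with
    | zero =>
      rw [s0] at h
      have := hfa _ h
      rwa [show n - 1 + 1 = n by omega, hYn] at this
    | succ i => rw [sp] at h; exact hfa _ h
  have hys : ∀ i, ∃ v ∈ Y i, i < n → (σ i = none ∨ σ i ≠ f (w v)) := by
    intro i
    by_cases h : i < n ∧ σ i ≠ none
    · obtain ⟨c, hc⟩ := Option.ne_none_iff_exists'.1 h.2
      obtain ⟨v, hv, hv'⟩ := hal' i h.1.le c hc
      exact ⟨v, hv, fun _ => Or.inr (by rw [hc]; exact hv'.symm)⟩
    · obtain ⟨v, hv⟩ : (Y i).Nonempty := by rw [← Finset.card_pos, R.card]; omega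
      refine ⟨v, hv, fun hi => Or.inl ?_⟩
      by_contra h'; exact h ⟨hi, h'⟩
  choose y0 hy0 hy0' using hys
  refine ring_single R hf σ (fun i => if i = n then y0 0 else y0 i) ?_ ?_ ?_ ?_ ?_ ?_ ?_
  · intro i hi
    by_cases h : i = n
    · simp only [h, if_true]; rw [hYn]; exact hy0 0
    · simp only [h, if_false]; exact hy0 i
  · simp [show (0:ℕ) ≠ n by omega]
  · rw [s0, spn n (by omega)]
  · intro i hi
    simp only [show i ≠ n by omega, if_false]
    exact hy0' i hi
  · intro i hi h
    cases i with
    | zero =>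
      rw [show 0 + 1 = 0 + 1 from rfl, sp, t0] at h
      rcases s0r with h' | h'
      · rw [h'] at h; simp at h
      · exact h'
    | succ i => rw [sp, sp] at h; rw [sp]; exact hdiff i h
  · intro i hi
    cases i with
    | zero => right; rw [sp, t0]; simp
    | succ i =>
      rw [sp, sp]
      by_cases h : τ (i+1) = none
      · exact Or.inl (hnn i h)
      · exact Or.inr h
  · intro i hi x hx h
    have pair : ∀ B : Finset V, B.card = 2 → (∀ v ∈ B, f (w v) ≠ none) →
        ∃ v ∈ B, ∃ v' ∈ B, v ≠ v' ∧ w v ≠ x ∧ w v' ≠ x := by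
      intro B hB hB'
      obtain ⟨a, b, hab, rfl⟩ := Finset.card_eq_two.1 hB
      refine ⟨a, by simp, b, by simp, hab, ?_, ?_⟩
      · intro h; exact hB' a (by simp) (h ▸ hx)
      · intro h; exact hB' b (by simp) (h ▸ hx)
    rcases h with h | h
    · obtain ⟨v, hv, v', hv', a, b, c⟩ := pair _ (R.card i) (hfa' i hi.le h)
      exact ⟨v, by simp [hv], v', by simp [hv'], a, Or.inr (Or.inr b), c⟩
    · obtain ⟨v, hv, v', hv', a, b, c⟩ := pair _ (R.card (i+1)) (hfa' (i+1) hi h)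
      exact ⟨v, by simp [hv], v', by simp [hv'], a, Or.inr (Or.inr b), c⟩

lemma pick_lemma {f : V → Option Bool} {A B : Finset V} (hA : A.card = 2) (hB : B.card = 2)
    (hAB : Disjoint A B) (hm : ¬ ∃ x, f x = none ∧ ∀ v ∈ A ∪ B, w v = x) (c : Bool)
    (hc : Allow f w B c) :
    ∃ y ∈ B, f (w y) ≠ some c ∧ ∀ x, f x = none → ∃ v ∈ A ∪ B, v ≠ y ∧ w v ≠ x := by
  have hd := Finset.disjoint_left.1 hAB
  by_cases h : ∃ x0, f x0 = none ∧ ∀ v ∈ A, w v = x0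
  · obtain ⟨x0, hx0, hA0⟩ := h
    obtain ⟨a, ha⟩ : A.Nonempty := by rw [← Finset.card_pos]; omega
    have red : ∀ y ∈ B, (∃ v ∈ A ∪ B, v ≠ y ∧ w v ≠ x0) →
        ∀ x, f x = none → ∃ v ∈ A ∪ B, v ≠ y ∧ w v ≠ x := by
      intro y hy h x hx
      by_cases hxx : x = x0
      · subst hxx; exact h
      · exact ⟨a, by simp [ha], fun h => hd ha (h ▸ hy), by rw [hA0 a ha]; exact Ne.symm hxx⟩
    by_cases hz : ∃ z ∈ B, w z = x0
    · obtain ⟨z, hz, hzx⟩ := hz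
      refine ⟨z, hz, by rw [hzx, hx0]; simp, red z hz ?_⟩
      by_contra hcon
      push Not at hcon
      exact hm ⟨x0, hx0, fun v hv => by
        by_cases hvz : v = z
        · rw [hvz, hzx]
        · exact hcon v hv hvz⟩
    · push Not at hz
      obtain ⟨y, hy, hyc⟩ := hc
      obtain ⟨b, hb, hby⟩ := Finset.exists_mem_ne (by omega : 1 < B.card) y
      exact ⟨y, hy, hyc, red y hy ⟨b, by simp [hb], hby, hz b hb⟩⟩
  · push Not at h
    obtain ⟨y, hy, hyc⟩ := hc
    refine ⟨y, hy, hyc, fun x hx => ?_⟩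
    obtain ⟨v, hv, hvx⟩ := h x hx
    exact ⟨v, by simp [hv], fun h => hd hv (h ▸ hy), hvx⟩

def Mono (f : V → Option Bool) (w : V → V) (Y : ℕ → Finset V) (i : ℕ) : Prop :=
  ∃ x, f x = none ∧ ∀ v ∈ Y i ∪ Y (i+1), w v = x

lemma ring_case2 (R : Ring4 G n Y w) {f : V → Option Bool} (hf : Off G Y f)
    (hall : ∀ i c, Allow f w (Y i) c) (h0 : ¬ Mono f w Y 0) (h1 : ¬ Mono f w Y (n-1)) :
    ∃ g, Good G g := by
  have h5 := R.h5
  have hodd := R.odd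
  have hYn : Y n = Y 0 := by have := R.per 0; rwa [zero_add] at this
  set c : ℕ → Bool := fun i => decide (i % 2 = 0) with hcdef
  have hcne : ∀ i, c i ≠ c (i+1) := by
    intro i h
    simp only [hcdef, decide_eq_decide] at h
    omega
  obtain ⟨a, ha, hac, ha'⟩ := pick_lemma (R.card 0) (R.card 1) (R.disj 0 1 (by omega) (by omega))
    h0 (c 1) (hall 1 _)
  have e1 : n - 1 + 1 = n := by omega
  obtain ⟨b, hb, hbc, hb'⟩ := pick_lemma (f := f) (w := w) (R.card n) (R.card (n-1))
    (R.disj (n-1) n (by omega) (by omega)).symm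
    (by unfold Mono at h1; rw [e1, Finset.union_comm] at h1; exact h1) (c (n-1)) (hall (n-1) _)
  have hall' : ∀ i, ∃ v ∈ Y i, f (w v) ≠ some (c i) := fun i => hall i (c i)
  choose z hz hzc using hall'
  set σ : ℕ → Option Bool := fun i => if i = 0 ∨ i = n then none else some (c i) with hσ
  set y : ℕ → V := fun i => if i = n then z 0 else if i = 1 then a else if i = n-1 then b else z i
    with hy
  have y1 : y 1 = a := by simp [hy, show 1 ≠ n by omega]
  have yb : y (n-1) = b := by
    simp [hy, show n - 1 ≠ n by omega, show n - 1 ≠ 1 by omega]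
  refine ring_single R hf σ y ?_ ?_ ?_ ?_ ?_ ?_ ?_
  · intro i hi
    simp only [hy]
    split_ifs with p q r
    · rw [p, hYn]; exact hz 0
    · rw [q]; exact ha
    · rw [r]; exact hb
    · exact hz i
  · simp [hy, show 0 ≠ n by omega, show 0 ≠ n - 1 by omega]
  · simp [hσ]
  · intro i hi
    by_cases h : i = 0
    · left; simp [hσ, h]
    right
    have : σ i = some (c i) := by simp [hσ, h, show i ≠ n by omega]
    rw [this]
    simp only [hy]
    split_ifs with p q r
    · omega
    · rw [q]; exact hac.symm
    · rw [r]; exact hbc.symm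
    · exact (hzc i).symm
  · intro i hi h
    by_contra hn
    have p : ¬ (i = 0 ∨ i = n) := fun p => hn (by simp only [hσ]; rw [if_pos p])
    have q : ¬ (i+1 = 0 ∨ i+1 = n) := by
      intro q; apply hn; rw [h]; simp only [hσ]; rw [if_pos q]
    simp only [hσ] at h
    rw [if_neg p, if_neg q] at h
    exact hcne i (by simpa using h)
  · intro i hi
    by_cases h : i = 0
    · right; subst h; simp [hσ, show 1 ≠ n by omega]
    · left; simp [hσ, h, show i ≠ n by omega]
  · intro i hi x hx h
    by_cases h0' : i = 0
    · subst h0'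
      obtain ⟨v, hv, hva, hvx⟩ := ha' x hx
      refine ⟨a, by simp [ha], v, by simpa using hv, hva.symm, Or.inr (Or.inl ⟨y1.symm, ?_⟩), hvx⟩
      simp [hσ, show 1 ≠ n by omega]
    · have hin : i = n - 1 := by
        by_contra hne
        simp [hσ, h0', show i ≠ n by omega, show i + 1 ≠ n by omega] at h
      subst hin
      obtain ⟨v, hv, hvb, hvx⟩ := hb' x hx
      refine ⟨b, by simp [hb], v, ?_, hvb.symm, Or.inl ⟨yb.symm, ?_⟩, hvx⟩
      · rw [e1, Finset.union_comm]; exact hv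
      · simp [hσ, show n - 1 ≠ 0 by omega, show n - 1 ≠ n by omega]
end
end BK


namespace BK
open Finset Classical

section
variable {V : Type*} {G : SimpleGraph V} {n : ℕ} {Y : ℕ → Finset V} {w : V → V}

lemma ring_case3 (R : Ring4 G n Y w) {f : V → Option Bool} (hf : Off G Y f)
    (hall : ∀ i c, Allow f w (Y i) c) (x0 : V) (hx0 : f x0 = none)
    (hw : ∀ v ∈ Y 0 ∪ Y 1 ∪ Y 2, w v = x0)
    (hw' : ∀ i, 3 ≤ i → i < n → ∀ v ∈ Y i, w v ≠ x0) :
    ∃ g, Good G g := by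
  have h5 := R.h5
  have hodd := R.odd
  have hYn : Y n = Y 0 := by have := R.per 0; rwa [zero_add] at this
  set c : ℕ → Bool := fun i => decide (i % 2 = 0) with hcdef
  have hcne : ∀ i, c i ≠ c (i+1) := by
    intro i h
    simp only [hcdef, decide_eq_decide] at h
    omega
  have hall' : ∀ i, ∃ v ∈ Y i, f (w v) ≠ some (c i) := fun i => hall i (c i)
  choose y hy hyc using hall'
  obtain ⟨g, hg, hgc⟩ := exists_glue R f (fun i v => if i = 1 then some (decide (v = y 1)) else
    if 3 ≤ i ∧ i < n ∧ v = y i then some (c i) else none) (by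
      intro v _; simp [show n ≠ 1 by omega])
  have g0 : ∀ i ≤ n, i = 0 ∨ i = 2 ∨ i = n → ∀ v ∈ Y i, g v = none := by
    intro i hi h v hv
    rw [hgc i hi v hv, if_neg (by omega), if_neg (by omega)]
  have g1 : ∀ v ∈ Y 1, g v = some (decide (v = y 1)) := by
    intro v hv
    rw [hgc 1 (by omega) v hv, if_pos rfl]
  have gy : ∀ i, 3 ≤ i → i < n → g (y i) = some (c i) := by
    intro i h3 hi
    rw [hgc i hi.le _ (hy i), if_neg (by omega), if_pos ⟨h3, hi, rfl⟩]
  have gn : ∀ i, 3 ≤ i → i < n → ∀ v ∈ Y i, g v ≠ none → v = y i := by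
    intro i h3 hi v hv h
    by_contra hne
    rw [hgc i hi.le _ hv, if_neg (by omega), if_neg (by tauto)] at h
    exact h rfl
  have two : ∀ i, ∃ v ∈ Y i, v ≠ y i := fun i =>
    Finset.exists_mem_ne (by rw [R.card]; omega) (y i)
  have cases4 : ∀ i < n, i = 0 ∨ i = 1 ∨ i = 2 ∨ (3 ≤ i) := by intro i _; omega
  refine ⟨g, good_of_check R hf hg ?_ ?_ ?_ ?_ ?_⟩
  · intro i hi v hv
    rcases cases4 i hi with h | h | h | h
    · left; exact g0 i hi.le (by omega) v hv
    · subst h; right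
      rw [g1 v hv, hw v (by simp [hv]), hx0]; simp
    · left; exact g0 i hi.le (by omega) v hv
    · by_cases hn : g v = none
      · exact Or.inl hn
      right
      have := gn i h hi v hv hn
      subst this
      rw [gy i h hi]; exact (hyc i).symm
  · intro i hi u hu v hv huv he
    rcases cases4 i hi with h | h | h | h
    · exact g0 i hi.le (by omega) u hu
    · subst h
      rw [g1 u hu, g1 v hv] at he
      simp only [Option.some.injEq, decide_eq_decide] at he
      obtain ⟨a, b, hab, hY⟩ := Finset.card_eq_two.1 (R.card 1)
      have h1 := hy 1
      rw [hY] at hu hv h1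
      simp only [Finset.mem_insert, Finset.mem_singleton] at hu hv h1
      exfalso
      clear_value c
      clear hyc hgc g0 g1 gy gn two hg hw hw' hf
      grind
    · exact g0 i hi.le (by omega) u hu
    · by_contra hn
      exact huv ((gn i h hi u hu hn).trans (gn i h hi v hv (he ▸ hn)).symm)
  · intro i hi u hu v hv he
    rcases cases4 i hi with h | h | h | h
    · exact g0 i hi.le (by omega) u hu
    · rw [he]; exact g0 (i+1) (by omega) (by omega) v hv
    · exact g0 i hi.le (by omega) u hu
    · by_cases hin : i + 1 = n
      · rw [he]; exact g0 (i+1) (by omega) (by omega) v hv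
      by_contra hn
      have e1 := gn i h hi u hu hn
      have e2 := gn (i+1) (by omega) (by omega) v hv (he ▸ hn)
      rw [e1, e2, gy i h hi, gy (i+1) (by omega) (by omega)] at he
      exact hcne i (by simpa using he)
  · intro i hi
    rcases cases4 i hi with h | h | h | h
    · subst h
      exact ⟨y 1, by simp [hy 1], by rw [g1 _ (hy 1)]; simp⟩
    · subst h
      exact ⟨y 1, by simp [hy 1], by rw [g1 _ (hy 1)]; simp⟩
    · subst h
      exact ⟨y 3, by simp [hy 3], by rw [gy 3 le_rfl (by omega)]; simp⟩
    · exact ⟨y i, by simp [hy i], by rw [gy i h hi]; simp⟩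
  · intro i hi x hx
    have aux : ∀ A B : ℕ, (∀ v ∈ Y A, w v = x0) → 3 ≤ B → B < n → Disjoint (Y A) (Y B) →
        ∃ v ∈ Y A ∪ Y B, ∃ v' ∈ Y A ∪ Y B, v ≠ v' ∧
        (g v ≠ none ∨ w v ≠ x) ∧ (g v' ≠ none ∨ w v' ≠ x) := by
      intro A B hA hB hBn hd
      by_cases hxx : x = x0
      · obtain ⟨v, hv, hvy⟩ := two B
        refine ⟨y B, by simp [hy B], v, by simp [hv], hvy.symm, Or.inl ?_, Or.inr ?_⟩
        · rw [gy B hB hBn]; simp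
        · rw [hxx]; exact hw' B hB hBn v hv
      · refine ⟨y B, by simp [hy B], y A, by simp [hy A], ?_, Or.inl ?_, Or.inr ?_⟩
        · intro h; exact Finset.disjoint_left.1 hd (hy A) (h ▸ hy B)
        · rw [gy B hB hBn]; simp
        · rw [hA _ (hy A)]; exact Ne.symm hxx
    rcases cases4 i hi with h | h | h | h
    · subst h
      obtain ⟨v, hv, hvy⟩ := two 1
      exact ⟨v, by simp [hv], y 1, by simp [hy 1], hvy, Or.inl (by rw [g1 _ hv]; simp),
        Or.inl (by rw [g1 _ (hy 1)]; simp)⟩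
    · subst h
      obtain ⟨v, hv, hvy⟩ := two 1
      exact ⟨v, by simp [hv], y 1, by simp [hy 1], hvy, Or.inl (by rw [g1 _ hv]; simp),
        Or.inl (by rw [g1 _ (hy 1)]; simp)⟩
    · subst h
      exact aux 2 3 (fun v hv => hw v (by simp [hv])) le_rfl (by omega)
        (R.disj 2 3 (by omega) (by omega))
    · by_cases hin : i + 1 = n
      · have := aux 0 i (fun v hv => hw v (by simp [hv])) h hi (R.disj 0 i (by omega) (by omega))
        rw [hin, hYn, Finset.union_comm]
        exact this
      · refine ⟨y i, by simp [hy i], y (i+1), by simp [hy (i+1)], ?_, Or.inl ?_, Or.inl ?_⟩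
        · intro h'
          exact Finset.disjoint_left.1 (R.disj i (i+1) (by omega) (by omega)) (hy i) (h' ▸ hy (i+1))
        · rw [gy i h hi]; simp
        · rw [gy (i+1) (by omega) (by omega)]; simp

theorem ring_extend [Fintype V] (R : Ring4 G n Y w) (hdeg : ∀ v, (nb G v).card ≤ 6)
    {f : V → Option Bool} (hf : Off G Y f)
    (huu : ∀ c, ∃ i, ∃ v ∈ Y i, f (w v) ≠ some c) : ∃ g, Good G g := by
  have h5 := R.h5
  have hodd := R.odd
  by_cases hall : ∀ i c, Allow f w (Y i) c
  · -- all flexible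
    have hper : ∀ i, Mono f w Y (i + n) ↔ Mono f w Y i := by
      intro i; unfold Mono
      rw [R.per, show i + n + 1 = i + 1 + n by omega, R.per]
    have hpar : ∃ i, Mono f w Y i ↔ Mono f w Y (i+1) := by
      by_contra hcon
      push Not at hcon
      have : ∀ k, (Mono f w Y k ↔ (Mono f w Y 0 ↔ k % 2 = 0)) := by
        intro k
        induction k with
        | zero => simp
        | succ k ih =>
          have := hcon k
          have e : (k+1) % 2 = 0 ↔ ¬ (k % 2 = 0) := by omega
          rw [e]
          tauto
      have h1 := this n
      have h2 := hper 0
      rw [zero_add] at h2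
      have : ¬ n % 2 = 0 := by omega
      tauto
    obtain ⟨i, hi⟩ := hpar
    by_cases hm : Mono f w Y i
    · have hm' := hi.1 hm
      obtain ⟨x, hx, hx'⟩ := hm
      obtain ⟨x', hxx, hx''⟩ := hm'
      obtain ⟨z, hz⟩ : (Y (i+1)).Nonempty := by rw [← Finset.card_pos, R.card]; omega
      have : x' = x := by rw [← hx' z (by simp [hz]), ← hx'' z (by simp [hz])]
      subst this
      have R' := R.shift i
      have hwx : ∀ v ∈ Y (0+i) ∪ Y (1+i) ∪ Y (2+i), w v = x' := by
        intro v hv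
        rw [zero_add, add_comm 1, add_comm 2] at hv
        rw [Finset.mem_union] at hv
        rcases hv with hv | hv
        · exact hx' v hv
        · exact hx'' v (Finset.mem_union_right _ hv)
      refine ring_case3 R' (hf.shift R i) (fun j c => hall _ c) x' hxx hwx ?_
      intro j h3 hj v hv hvx
      have d01 := R'.disj 0 1 (by omega) (by omega)
      have d02 := R'.disj 0 2 (by omega) (by omega)
      have d12 := R'.disj 1 2 (by omega) (by omega)
      have d0 := R'.disj 0 j (by omega) (by omega)
      have d1 := R'.disj 1 j (by omega) (by omega)
      have d2 := R'.disj 2 j (by omega) (by omega)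
      have hsub : insert v (Y (0+i) ∪ Y (1+i) ∪ Y (2+i)) ⊆ nb G x' := by
        intro u hu
        rw [mem_nb]
        rw [Finset.mem_insert] at hu
        rcases hu with rfl | hu
        · have := R'.adj j u hv; rw [hvx] at this; exact this.symm
        · have hwu := hwx u hu
          simp only [Finset.mem_union] at hu
          rcases hu with (hu | hu) | hu <;>
          · have := R.adj _ u hu; rw [hwu] at this; exact this.symm
      have hcard := Finset.card_le_card hsub
      rw [Finset.card_insert_of_notMem, Finset.card_union_of_disjoint,
        Finset.card_union_of_disjoint d01, R.card, R.card, R.card] at hcard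
      · have := hdeg x'; omega
      · rw [Finset.disjoint_union_left]; exact ⟨d02, d12⟩
      · simp only [Finset.mem_union, not_or]
        exact ⟨⟨fun h => Finset.disjoint_left.1 d0 h hv, fun h => Finset.disjoint_left.1 d1 h hv⟩,
          fun h => Finset.disjoint_left.1 d2 h hv⟩
    · have hm' : ¬ Mono f w Y (i+1) := fun h => hm (hi.2 h)
      refine ring_case2 (R.shift (i+1)) (hf.shift R (i+1)) (fun j c => hall _ c) ?_ ?_
      · unfold Mono at hm' ⊢
        beta_reduce
        rwa [zero_add, show 1 + (i+1) = i + 1 + 1 by omega]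
      · rw [← hper i] at hm
        unfold Mono at hm ⊢
        beta_reduce
        rwa [show n - 1 + (i+1) = i + n by omega, show n - 1 + 1 + (i+1) = i + n + 1 by omega]
  · push Not at hall
    obtain ⟨i, c, hic⟩ := hall
    by_cases hex : ∃ j, ¬ Allow f w (Y j) c ∧ Allow f w (Y (j+1)) c
    · obtain ⟨j, h1, h2⟩ := hex
      refine ring_case1 (R.shift j) (hf.shift R j) (!c) ?_ ?_
      · simpa using h1
      · simpa [add_comm 1 j] using h2
    · push Not at hex
      exfalso
      have hno : ∀ k, ¬ Allow f w (Y (i + k)) c := by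
        intro k
        induction k with
        | zero => exact hic
        | succ k ih => exact hex _ ih
      obtain ⟨j, v, hv, hvc⟩ := huu c
      have e : i ≤ i * n := Nat.le_mul_of_pos_right _ (by omega)
      apply hno (j + i * n - i)
      rw [show i + (j + i * n - i) = j + i * n by omega, R.per_mul]
      exact ⟨v, hv, hvc⟩
end
end BK


namespace BK
open Finset Classical

section
variable {V : Type*} {G : SimpleGraph V}

/-- make the vertices of `S` isolated -/
def iso (G : SimpleGraph V) (S : Finset V) : SimpleGraph V where
  Adj a b := G.Adj a b ∧ a ∉ S ∧ b ∉ S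
  symm := ⟨fun _ _ h => ⟨h.1.symm, h.2.2, h.2.1⟩⟩
  loopless := ⟨fun _ h => h.1.ne rfl⟩

lemma iso_adj {S : Finset V} {a b : V} : (iso G S).Adj a b ↔ G.Adj a b ∧ a ∉ S ∧ b ∉ S := Iff.rfl

lemma iso_clq {S : Finset V} {t : ℕ} (ht : 2 ≤ t) {Q : Finset V} :
    (iso G S).IsNClique t Q ↔ G.IsNClique t Q ∧ ∀ v ∈ Q, v ∉ S := by
  constructor
  · intro h
    refine ⟨⟨fun a ha b hb hab => (h.isClique ha hb hab).1, h.card_eq⟩, fun v hv => ?_⟩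
    obtain ⟨b, hb, hbv⟩ := Finset.exists_mem_ne (by rw [h.card_eq]; omega : 1 < Q.card) v
    exact (h.isClique hv hb hbv.symm).2.1
  · rintro ⟨h, h'⟩
    exact ⟨fun a ha b hb hab => ⟨h.isClique ha hb hab, h' a ha, h' b hb⟩, h.card_eq⟩

variable [Fintype V]

lemma exists_maxind (J : Finset V) (hJ : ∀ x ∈ J, ∀ y ∈ J, ¬ G.Adj x y) :
    ∃ I : Finset V, J ⊆ I ∧ (∀ x ∈ I, ∀ y ∈ I, ¬ G.Adj x y) ∧ ∀ v ∉ I, ∃ u ∈ I, G.Adj v u := by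
  obtain ⟨I, hI, hmax⟩ := Finset.exists_max_image
    (Finset.univ.filter (fun I : Finset V => J ⊆ I ∧ ∀ x ∈ I, ∀ y ∈ I, ¬ G.Adj x y)) Finset.card
    ⟨J, by simp only [Finset.mem_filter, Finset.mem_univ, true_and]; exact ⟨subset_rfl, hJ⟩⟩
  simp only [Finset.mem_filter, Finset.mem_univ, true_and] at hI hmax
  refine ⟨I, hI.1, hI.2, fun v hv => ?_⟩
  by_contra hcon
  push Not at hcon
  have := hmax (insert v I) ⟨hI.1.trans (Finset.subset_insert _ _), by
    intro x hx y hy hxy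
    rw [Finset.mem_insert] at hx hy
    rcases hx with rfl | hx <;> rcases hy with rfl | hy
    · exact hxy.ne rfl
    · exact hcon y hy hxy
    · exact hcon x hx hxy.symm
    · exact hI.2 x hx y hy hxy⟩
  rw [Finset.card_insert_of_notMem hv] at this
  omega

lemma iso_deg {I : Finset V} (hdom : ∀ v ∉ I, ∃ u ∈ I, G.Adj v u) {d : ℕ}
    (hdeg : ∀ v, (nb G v).card ≤ d + 1) (v : V) : (nb (iso G I) v).card ≤ d := by
  by_cases hv : v ∈ I
  · have : nb (iso G I) v = ∅ := by
      apply Finset.eq_empty_of_forall_notMem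
      intro x hx
      rw [mem_nb, iso_adj] at hx
      exact hx.2.1 hv
    rw [this]; simp
  · obtain ⟨u, hu, huv⟩ := hdom v hv
    have hsub : insert u (nb (iso G I) v) ⊆ nb G v := by
      intro x hx
      rw [Finset.mem_insert] at hx
      rw [mem_nb]
      rcases hx with rfl | hx
      · exact huv
      · rw [mem_nb, iso_adj] at hx; exact hx.1
    have h := Finset.card_le_card hsub
    rw [Finset.card_insert_of_notMem] at h
    · have := hdeg v; omega
    · rw [mem_nb, iso_adj]; exact fun h => h.2.2 hu

lemma iso_free {I : Finset V} {t : ℕ} (ht : 2 ≤ t)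
    (hI : ∀ Q, G.IsNClique t Q → ∃ x ∈ Q, x ∈ I) : (iso G I).CliqueFree t := by
  intro Q hQ
  obtain ⟨h1, h2⟩ := (iso_clq ht).1 hQ
  obtain ⟨x, hx, hx'⟩ := hI Q h1
  exact h2 x hx hx'

lemma ring_of_bad {I : Finset V} (hI : ∀ x ∈ I, ∀ y ∈ I, ¬ G.Adj x y)
    (hdom : ∀ v ∉ I, ∃ u ∈ I, G.Adj v u) (hdeg : ∀ v, (nb G v).card ≤ 6)
    (hbad : Bad (iso G I)) : ∃ n Y w, Ring4 G n Y w ∧ (∀ i, ∀ v ∈ Y i, w v ∈ I) ∧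
      ∀ i, ∀ v ∈ Y i, v ∉ I := by
  obtain ⟨m, X, hm4, hm2, hX, hcl⟩ := hbad
  have hdeg0 := iso_deg hdom (d := 5) hdeg
  set n := m + 1 with hn
  set Y : ℕ → Finset V := fun i => X (i % n) with hY
  have hlt : ∀ i, i % n ≤ m := fun i => by have := Nat.mod_lt i (show 0 < n by omega); omega
  have card : ∀ i, (Y i).card = 2 := fun i => hX.card _ (hlt i)
  have disj : ∀ i j, i < j → j < i + n → Disjoint (Y i) (Y j) := by
    intro i j h1 h2
    apply hX.disj _ (hlt i) _ (hlt j)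
    intro h
    have h3 := Nat.sub_mod_eq_zero_of_mod_eq h.symm
    rw [Nat.mod_eq_of_lt (by omega)] at h3
    omega
  have clq : ∀ i, (iso G I).IsNClique 4 (Y i ∪ Y (i+1)) := by
    intro i
    simp only [hY]
    rw [show (i+1) % n = (i % n + 1) % n by rw [Nat.mod_add_mod]]
    rcases Nat.lt_or_eq_of_le (hlt i) with h | h
    · rw [Nat.mod_eq_of_lt (by omega : i % n + 1 < n)]; exact hX.clq _ h
    · rw [h, ← hn, Nat.mod_self]; exact hcl
  have hloc : ∀ i v, v ∈ Y (i+1) → insert v (nb (iso G I) v) = Y i ∪ Y (i+1) ∪ Y (i+2) := by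
    intro i v hv
    exact local_nb hdeg0 (card _) (card _) (card _) (disj _ _ (by omega) (by omega))
      (disj _ _ (by omega) (by omega)) (disj _ _ (by omega) (by omega)) (clq i) (clq (i+1)) hv
  have hnI : ∀ i, ∀ v ∈ Y i, v ∉ I := by
    intro i v hv
    exact ((iso_clq (by omega)).1 (clq i)).2 v (by simp [hv])
  have per : ∀ i, Y (i + n) = Y i := by intro i; simp [hY]
  have hex : ∀ v, ∃ u, v ∉ I → (u ∈ I ∧ G.Adj v u) := by
    intro v
    by_cases h : v ∈ I
    · exact ⟨v, fun h' => (h' h).elim⟩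
    · obtain ⟨u, h1, h2⟩ := hdom v h; exact ⟨u, fun _ => ⟨h1, h2⟩⟩
  choose w hw using hex
  refine ⟨n, Y, w, ⟨by omega, by omega, per, card, disj, ?_, ?_, ?_⟩, ?_, hnI⟩
  · intro i v hv k hk
    exact hnI k _ hk (hw v (hnI i v hv)).1
  · intro i v hv
    exact (hw v (hnI i v hv)).2
  · intro i v hv x hx
    obtain ⟨hwI, hwa⟩ := hw v (hnI _ v hv)
    by_contra hcon
    push Not at hcon
    obtain ⟨h1, h2⟩ := hcon
    rw [← hloc i v hv, Finset.mem_insert, not_or] at h1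
    have hsub : insert x (insert (w v) (nb (iso G I) v)) ⊆ nb G v := by
      intro z hz
      rw [mem_nb]
      simp only [Finset.mem_insert] at hz
      rcases hz with rfl | rfl | hz
      · exact hx
      · exact hwa
      · rw [mem_nb, iso_adj] at hz; exact hz.1
    have hc := Finset.card_le_card hsub
    have h5 : (nb (iso G I) v).card + 1 = 6 := by
      rw [← Finset.card_insert_of_notMem (not_self_nb v), hloc i v hv,
        Finset.card_union_of_disjoint, Finset.card_union_of_disjoint
          (disj i (i+1) (by omega) (by omega)), card, card, card]
      rw [Finset.disjoint_union_left]
      exact ⟨disj _ _ (by omega) (by omega), disj _ _ (by omega) (by omega)⟩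
    rw [Finset.card_insert_of_notMem, Finset.card_insert_of_notMem] at hc
    · have := hdeg v; omega
    · rw [mem_nb, iso_adj]; exact fun h => h.2.2 hwI
    · rw [Finset.mem_insert, not_or]; exact ⟨h2, h1.2⟩
  · intro i v hv
    exact (hw v (hnI i v hv)).1

lemma choose_pair {n : ℕ} {Y : ℕ → Finset V} {w : V → V} (R : Ring4 G n Y w)
    (hdeg : ∀ v, (nb G v).card ≤ 6) {I : Finset V} (hI : ∀ x ∈ I, ∀ y ∈ I, ¬ G.Adj x y)
    (hwI : ∀ i, ∀ v ∈ Y i, w v ∈ I) (F : Finset V) (hF : ∀ v, v ∈ F ↔ ∃ i, v ∈ Y i) :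
    ∃ a ∈ F, ∃ b ∈ F, w a ≠ w b ∧ ∀ Q, G.IsNClique 4 Q → (∀ q ∈ Q, q ∉ F) →
      (∀ q ∈ Q, G.Adj (w a) q) → (∀ q ∈ Q, G.Adj (w b) q) → False := by
  have h5 := R.h5
  have hadj : ∀ v ∈ F, G.Adj (w v) v := by
    intro v hv; obtain ⟨i, hi⟩ := (hF v).1 hv; exact (R.adj i v hi).symm
  have hwI' : ∀ v ∈ F, w v ∈ I := by
    intro v hv; obtain ⟨i, hi⟩ := (hF v).1 hv; exact hwI i v hi
  have hFc : 10 ≤ F.card := by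
    have hsub : (Finset.range 5).biUnion Y ⊆ F := by
      intro v hv
      rw [Finset.mem_biUnion] at hv
      obtain ⟨i, _, hi⟩ := hv
      exact (hF v).2 ⟨i, hi⟩
    have := Finset.card_le_card hsub
    rw [Finset.card_biUnion] at this
    · simpa [R.card] using this
    · intro i hi j hj hij
      simp only [Finset.coe_range, Set.mem_Iio, Finset.mem_coe, Finset.mem_range] at hi hj
      rcases Nat.lt_or_gt_of_ne hij with h | h
      · exact R.disj i j h (by omega)
      · exact (R.disj j i h (by omega)).symm
  by_cases hbig : ∃ a ∈ F, 3 ≤ (F.filter (fun v => w v = w a)).card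
  · obtain ⟨a, ha, h3⟩ := hbig
    have : ∃ b ∈ F, w a ≠ w b := by
      by_contra hcon
      push Not at hcon
      have hsub : F ⊆ nb G (w a) := by
        intro v hv; rw [mem_nb, hcon v hv]; exact hadj v hv
      have := Finset.card_le_card hsub
      have := hdeg (w a); omega
    obtain ⟨b, hb, hab⟩ := this
    refine ⟨a, ha, b, hb, hab, fun Q hQ hQF hQa _ => ?_⟩
    have hsub : Q ∪ F.filter (fun v => w v = w a) ⊆ nb G (w a) := by
      intro v hv
      rw [mem_nb]
      rw [Finset.mem_union, Finset.mem_filter] at hv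
      rcases hv with hv | ⟨hv, hv'⟩
      · exact hQa v hv
      · rw [← hv']; exact hadj v hv
    have := Finset.card_le_card hsub
    rw [Finset.card_union_of_disjoint, hQ.card_eq] at this
    · have := hdeg (w a); omega
    · rw [Finset.disjoint_left]; intro q hq hq'
      exact hQF q hq (Finset.mem_filter.1 hq').1
  · push Not at hbig
    have hN : F.card ≤ 2 * (F.image w).card := by
      apply Finset.card_le_mul_card_image
      intro u hu
      obtain ⟨a, ha, rfl⟩ := Finset.mem_image.1 hu
      have := hbig a ha; omega
    obtain ⟨a, ha⟩ : F.Nonempty := by rw [← Finset.card_pos]; omega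
    have h3 : 2 < ((F.image w).erase (w a)).card := by
      rw [Finset.card_erase_of_mem (Finset.mem_image_of_mem w ha)]; omega
    by_contra hcon
    push Not at hcon
    obtain ⟨u1, hu1, u2, hu2, u3, hu3, h12, h13, h23⟩ := Finset.two_lt_card.1 h3
    have hcon' : ∀ u ∈ (F.image w).erase (w a), u ∈ I ∧ u ≠ w a ∧ ∃ Q, G.IsNClique 4 Q ∧
        (∀ q ∈ Q, q ∉ F) ∧ (∀ q ∈ Q, G.Adj (w a) q) ∧ (∀ q ∈ Q, G.Adj u q) := by
      intro u hu
      obtain ⟨hne, hu⟩ := Finset.mem_erase.1 hu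
      obtain ⟨b, hb, rfl⟩ := Finset.mem_image.1 hu
      obtain ⟨Q, h1, h2, h3, h4, -⟩ := hcon a ha b hb (Ne.symm hne)
      exact ⟨hwI' b hb, hne, Q, h1, h2, h3, h4⟩
    obtain ⟨i1, n1, Q1, c1, f1, a1, b1⟩ := hcon' u1 hu1
    obtain ⟨i2, n2, Q2, c2, f2, a2, b2⟩ := hcon' u2 hu2
    obtain ⟨i3, n3, Q3, c3, f3, a3, b3⟩ := hcon' u3 hu3
    set S := nb G (w a) \ F with hS
    have hSc : S.card ≤ 5 := by
      have hsub : insert a S ⊆ nb G (w a) := by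
        intro v hv
        rw [Finset.mem_insert] at hv
        rcases hv with rfl | hv
        · rw [mem_nb]; exact hadj v ha
        · exact (Finset.mem_sdiff.1 hv).1
      have := Finset.card_le_card hsub
      rw [Finset.card_insert_of_notMem (by simp [hS, ha])] at this
      have := hdeg (w a); omega
    have s1 : Q1 ⊆ S := fun q hq => by rw [hS, Finset.mem_sdiff, mem_nb]; exact ⟨a1 q hq, f1 q hq⟩
    have s2 : Q2 ⊆ S := fun q hq => by rw [hS, Finset.mem_sdiff, mem_nb]; exact ⟨a2 q hq, f2 q hq⟩
    have s3 : Q3 ⊆ S := fun q hq => by rw [hS, Finset.mem_sdiff, mem_nb]; exact ⟨a3 q hq, f3 q hq⟩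
    have k1 := Finset.card_union_add_card_inter Q1 Q2
    have k2 := Finset.card_union_add_card_inter (Q1 ∩ Q2) Q3
    have k3 := Finset.card_le_card (Finset.union_subset s1 s2)
    have k4 := Finset.card_le_card (Finset.union_subset (Finset.inter_subset_left.trans s1 : Q1 ∩ Q2 ⊆ S) s3)
    rw [c1.card_eq, c2.card_eq] at k1
    rw [c3.card_eq] at k2
    obtain ⟨q, hq⟩ : ((Q1 ∩ Q2) ∩ Q3).Nonempty := by rw [← Finset.card_pos]; omega
    simp only [Finset.mem_inter] at hq
    obtain ⟨⟨q1, q2⟩, q3⟩ := hq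
    have hIQ : ∀ x ∈ I, x ∉ Q1 := fun x hx hx' => hI _ (hwI' a ha) x hx (a1 x hx')
    have hsub : insert (w a) (insert u1 (insert u2 (insert u3 (Q1.erase q)))) ⊆ nb G q := by
      intro v hv
      rw [mem_nb]
      simp only [Finset.mem_insert, Finset.mem_erase] at hv
      rcases hv with rfl | rfl | rfl | rfl | ⟨hvq, hv⟩
      · exact (a1 q q1).symm
      · exact (b1 q q1).symm
      · exact (b2 q q2).symm
      · exact (b3 q q3).symm
      · exact c1.isClique q1 hv hvq.symm
    have hc := Finset.card_le_card hsub
    have e1 := hIQ _ (hwI' a ha)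
    have e2 := hIQ u1 i1
    have e3 := hIQ u2 i2
    have e4 := hIQ u3 i3
    rw [Finset.card_insert_of_notMem (by simp [n1.symm, n2.symm, n3.symm, e1]),
      Finset.card_insert_of_notMem (by simp [h12, h13, e2]),
      Finset.card_insert_of_notMem (by simp [h23, e3]),
      Finset.card_insert_of_notMem (by simp [e4]), Finset.card_erase_of_mem q1, c1.card_eq] at hc
    have := hdeg q
    omega

theorem base_aux (N : ℕ) : ∀ G : SimpleGraph V,
    (Finset.univ.filter (fun v => ∃ u, G.Adj v u)).card ≤ N →
    (∀ v, (nb G v).card ≤ 6) → G.CliqueFree 6 → ∃ g, Good G g := by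
  induction N using Nat.strong_induction_on with
  | _ N ih =>
  intro G hN hdeg hfree
  rcases isEmpty_or_nonempty V with hV | hV
  · refine ⟨fun _ => none, fun _ _ _ _ => rfl, fun Q hQ => ?_⟩
    have := hQ.card_eq
    rw [Finset.eq_empty_of_isEmpty Q] at this
    simp at this
  obtain ⟨J, hJ, hJh⟩ := hit5 (t := 5) le_rfl hfree hdeg
  obtain ⟨I, hJI, hI, hdom⟩ := exists_maxind J hJ
  have hfree0 : (iso G I).CliqueFree 5 := iso_free (by omega) (fun Q hQ => by
    obtain ⟨x, hx, hx'⟩ := hJh Q hQ; exact ⟨x, hx, hJI hx'⟩)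
  by_cases hbad : Bad (iso G I)
  · obtain ⟨n, Y, w, R, hwI, hYI⟩ := ring_of_bad hI hdom hdeg hbad
    have h5 := R.h5
    set F : Finset V := Finset.univ.filter (fun v => ∃ i, v ∈ Y i) with hFdef
    have hF : ∀ v, v ∈ F ↔ ∃ i, v ∈ Y i := by intro v; simp [hFdef]
    obtain ⟨a, ha, b, hb, hab, hno⟩ := choose_pair R hdeg hI hwI F hF
    have hadj : ∀ v ∈ F, G.Adj (w v) v := by
      intro v hv; obtain ⟨i, hi⟩ := (hF v).1 hv; exact (R.adj i v hi).symm
    have hwF : ∀ v ∈ F, w v ∉ F := by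
      intro v hv; obtain ⟨i, hi⟩ := (hF v).1 hv
      rw [hF]; push Not; exact R.out i v hi
    set u := w a with hu
    set u' := w b with hu'
    set H : SimpleGraph V := iso G F ⊔ SimpleGraph.edge u u' with hH
    have Hadj : ∀ x y, H.Adj x y ↔ (G.Adj x y ∧ x ∉ F ∧ y ∉ F) ∨ (x = u ∧ y = u') ∨
        (x = u' ∧ y = u) := by
      intro x y
      rw [hH, SimpleGraph.sup_adj, iso_adj, SimpleGraph.edge_adj]
      constructor
      · rintro (h | ⟨h, -⟩)
        · exact Or.inl h
        · exact Or.inr h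
      · rintro (h | h)
        · exact Or.inl h
        · refine Or.inr ⟨h, ?_⟩
          rcases h with ⟨rfl, rfl⟩ | ⟨rfl, rfl⟩
          · exact hab
          · exact hab.symm
    have HF : ∀ x y, H.Adj x y → x ∉ F := by
      intro x y h
      rcases (Hadj x y).1 h with h | ⟨rfl, -⟩ | ⟨rfl, -⟩
      · exact h.2.1
      · exact hwF a ha
      · exact hwF b hb
    have hlt : (Finset.univ.filter (fun v => ∃ u, H.Adj v u)).card <
        (Finset.univ.filter (fun v => ∃ u, G.Adj v u)).card := by
      apply Finset.card_lt_card
      rw [Finset.ssubset_iff_of_subset]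
      · refine ⟨a, ?_, ?_⟩
        · simp only [Finset.mem_filter, Finset.mem_univ, true_and]
          exact ⟨_, (hadj a ha).symm⟩
        · simp only [Finset.mem_filter, Finset.mem_univ, true_and]
          rintro ⟨x, hx⟩
          exact HF a x hx ha
      · intro x
        simp only [Finset.mem_filter, Finset.mem_univ, true_and]
        rintro ⟨y, hy⟩
        rcases (Hadj x y).1 hy with h | ⟨rfl, -⟩ | ⟨rfl, -⟩
        · exact ⟨y, h.1⟩
        · exact ⟨_, hadj a ha⟩
        · exact ⟨_, hadj b hb⟩
    have hdegp : ∀ c ∈ F, ∀ z, nb H (w c) ⊆ insert z (nb G (w c) \ F) →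
        (nb H (w c)).card ≤ 6 := by
      intro c hc z h
      have h1 := Finset.card_le_card h
      have h2 := Finset.card_insert_le z (nb G (w c) \ F)
      have h3 : (nb G (w c) \ F).card < (nb G (w c)).card := by
        apply Finset.card_lt_card
        rw [Finset.ssubset_iff_of_subset Finset.sdiff_subset]
        exact ⟨c, by rw [mem_nb]; exact hadj c hc, by simp [hc]⟩
      have := hdeg (w c)
      omega
    have hdegH : ∀ v, (nb H v).card ≤ 6 := by
      intro v
      by_cases h1 : v = u
      · rw [h1]
        apply hdegp a ha u'
        intro x hx
        rw [mem_nb, Hadj] at hx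
        rw [Finset.mem_insert, Finset.mem_sdiff, mem_nb]
        rcases hx with h | ⟨-, h⟩ | ⟨h, -⟩
        · exact Or.inr ⟨h.1, h.2.2⟩
        · exact Or.inl h
        · exact (hab h).elim
      by_cases h2 : v = u'
      · rw [h2]
        apply hdegp b hb u
        intro x hx
        rw [mem_nb, Hadj] at hx
        rw [Finset.mem_insert, Finset.mem_sdiff, mem_nb]
        rcases hx with h | ⟨h, -⟩ | ⟨-, h⟩
        · exact Or.inr ⟨h.1, h.2.2⟩
        · exact (hab h.symm).elim
        · exact Or.inl h
      refine le_trans (Finset.card_le_card ?_) (hdeg v)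
      intro x hx
      rw [mem_nb, Hadj] at hx
      rw [mem_nb]
      rcases hx with h | ⟨h, -⟩ | ⟨h, -⟩
      · exact h.1
      · exact (h1 h).elim
      · exact (h2 h).elim
    have hfreeH : H.CliqueFree 6 := by
      intro Q hQ
      have hQF : ∀ q ∈ Q, q ∉ F := by
        intro q hq
        obtain ⟨z, hz, hzq⟩ := Finset.exists_mem_ne (by rw [hQ.card_eq]; omega : 1 < Q.card) q
        exact HF q z (hQ.isClique hq hz hzq.symm)
      have hGadj : ∀ x ∈ Q, ∀ y ∈ Q, x ≠ y → ¬ (x = u ∧ y = u') → ¬ (x = u' ∧ y = u) →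
          G.Adj x y := by
        intro x hx y hy hxy h1 h2
        rcases (Hadj x y).1 (hQ.isClique hx hy hxy) with h | h | h
        · exact h.1
        · exact (h1 h).elim
        · exact (h2 h).elim
      by_cases hb2 : u ∈ Q ∧ u' ∈ Q
      · obtain ⟨huQ, huQ'⟩ := hb2
        apply hno ((Q.erase u).erase u')
        · refine ⟨?_, ?_⟩
          · intro x hx y hy hxy
            simp only [Finset.coe_erase, Set.mem_sdiff, Finset.mem_coe, Set.mem_singleton_iff]
              at hx hy
            exact hGadj x hx.1.1 y hy.1.1 hxy (fun h => hx.1.2 h.1) (fun h => hx.2 h.1)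
          · rw [Finset.card_erase_of_mem (by rw [Finset.mem_erase]; exact ⟨hab.symm, huQ'⟩),
              Finset.card_erase_of_mem huQ, hQ.card_eq]
        · intro q hq
          exact hQF q (Finset.mem_of_mem_erase (Finset.mem_of_mem_erase hq))
        · intro q hq
          simp only [Finset.mem_erase] at hq
          exact hGadj u huQ q hq.2.2 (Ne.symm hq.2.1) (fun h => hq.1 h.2) (fun h => hq.2.1 h.2)
        · intro q hq
          simp only [Finset.mem_erase] at hq
          exact hGadj u' huQ' q hq.2.2 (Ne.symm hq.1) (fun h => hq.1 h.2) (fun h => hq.2.1 h.2)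
      · refine hfree Q ⟨fun x hx y hy hxy => hGadj x hx y hy hxy ?_ ?_, hQ.card_eq⟩
        · rintro ⟨rfl, rfl⟩; exact hb2 ⟨hx, hy⟩
        · rintro ⟨rfl, rfl⟩; exact hb2 ⟨hy, hx⟩
    obtain ⟨f, hf1, hf2⟩ := ih _ (lt_of_lt_of_le hlt hN) H (le_of_eq (by congr)) hdegH hfreeH
    have hoff : Off G Y f := by
      refine ⟨fun x y hx hy hxy he => hf1 x y ?_ he, fun Q hQ hQF => hf2 Q ⟨?_, hQ.card_eq⟩⟩
      · rw [Hadj]; left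
        refine ⟨hxy, ?_, ?_⟩ <;> rw [hF] <;> push Not <;> assumption
      · intro x hx y hy hxy
        rw [Hadj]; left
        refine ⟨hQ.isClique hx hy hxy, ?_, ?_⟩ <;> rw [hF] <;> push Not
        · exact hQF x hx
        · exact hQF y hy
    refine ring_extend R hdeg hoff fun c => ?_
    by_contra hcon
    push Not at hcon
    obtain ⟨i, hi⟩ := (hF a).1 ha
    obtain ⟨j, hj⟩ := (hF b).1 hb
    have e1 := hcon i a hi
    have e2 := hcon j b hj
    have := hf1 u u' (by rw [Hadj]; simp) (by rw [e1, e2])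
    rw [e1] at this
    simp at this
  · obtain ⟨J', hJ', hJh'⟩ := hit4 hfree0 (iso_deg hdom (d := 5) hdeg) hbad
    refine ⟨fun v => if v ∈ I then some true else if v ∈ J' then some false else none, ?_, ?_⟩
    · intro x y hxy he
      beta_reduce at he ⊢
      by_cases h1 : x ∈ I
      · have h2 : y ∉ I := fun h2 => hI x h1 y h2 hxy
        by_cases h3 : y ∈ J' <;> simp [h1, h2, h3] at he
      by_cases h2 : x ∈ J'
      · by_cases h3 : y ∈ I
        · simp [h1, h2, h3] at he
        by_cases h4 : y ∈ J'
        · exact (hJ' x h2 y h4 ⟨hxy, h1, h3⟩).elim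
        · simp [h1, h2, h3, h4] at he
      · simp [h1, h2]
    · intro Q hQ
      by_cases h : ∃ x ∈ Q, x ∈ I
      · obtain ⟨x, hx, hxI⟩ := h
        exact ⟨x, hx, by simp [hxI]⟩
      · push Not at h
        obtain ⟨x, hx, hxJ⟩ := hJh' Q ((iso_clq (by omega)).2 ⟨hQ, h⟩)
        exact ⟨x, hx, by simp [h x hx, hxJ]⟩

/-- the general coloring statement -/
theorem main_color (D : ℕ) (hD : 6 ≤ D) : ∀ G : SimpleGraph V,
    (∀ v, (nb G v).card ≤ D) → G.CliqueFree D → ∃ f : V → ℕ, (∀ v, f v ≤ D - 4) ∧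
      (∀ u v, G.Adj u v → f u = f v → f u = D - 4) ∧
      ∀ Q, G.IsNClique 4 Q → ∃ x ∈ Q, f x ≠ D - 4 := by
  induction D, hD using Nat.le_induction with
  | base =>
    intro G hdeg hfree
    obtain ⟨g, hg1, hg2⟩ := base_aux _ G le_rfl hdeg hfree
    refine ⟨fun v => match g v with | none => 2 | some true => 0 | some false => 1, ?_, ?_, ?_⟩
    · intro v; beta_reduce; split <;> omega
    · intro u v huv he
      have := hg1 u v huv
      beta_reduce at he ⊢
      rcases hu : g u with _ | _ | _ <;> rcases hv : g v with _ | _ | _ <;> simp_all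
    · intro Q hQ
      obtain ⟨x, hx, h⟩ := hg2 Q hQ
      refine ⟨x, hx, ?_⟩
      beta_reduce
      split <;> simp_all
  | succ D hD ih =>
    intro G hdeg hfree
    rcases isEmpty_or_nonempty V with hV | hV
    · refine ⟨fun _ => 0, fun v => hV.elim v, fun v => hV.elim v, fun Q hQ => ?_⟩
      have := hQ.card_eq
      rw [Finset.eq_empty_of_isEmpty Q] at this
      simp at this
    obtain ⟨J, hJ, hJh⟩ := hit5 (t := D) (by omega) hfree hdeg
    obtain ⟨I, hJI, hI, hdom⟩ := exists_maxind J hJ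
    have hfree0 : (iso G I).CliqueFree D := iso_free (by omega) (fun Q hQ => by
      obtain ⟨x, hx, hx'⟩ := hJh Q hQ; exact ⟨x, hx, hJI hx'⟩)
    obtain ⟨f, hf0, hf1, hf2⟩ := ih (iso G I) (iso_deg hdom hdeg) hfree0
    have e : D + 1 - 4 = (D - 4) + 1 := by omega
    rw [e]
    refine ⟨fun v => if v ∈ I then 0 else f v + 1, ?_, ?_, ?_⟩
    · intro v; beta_reduce; have := hf0 v; split_ifs <;> omega
    · intro u v huv he
      beta_reduce at he ⊢
      split_ifs at he ⊢ with h1 h2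
      · exact (hI u h1 v h2 huv).elim
      · rw [hf1 u v ⟨huv, h1, by assumption⟩ (by omega)]
    · intro Q hQ
      by_cases h : ∃ x ∈ Q, x ∈ I
      · obtain ⟨x, hx, hxI⟩ := h
        exact ⟨x, hx, by simp [hxI]⟩
      · push Not at h
        obtain ⟨x, hx, hxJ⟩ := hf2 Q ((iso_clq (by omega)).2 ⟨hQ, h⟩)
        exact ⟨x, hx, by simp [h x hx, hxJ]⟩
end
end BK


namespace BK
open Finset Classical

/-- distribute `∑ q` colors into fibers of size `q i` -/
lemma exists_distr {k : ℕ} (q : Fin k → ℕ) (i0 : Fin k) : ∃ m : ℕ → Fin k, m (∑ i, q i) = i0 ∧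
    ∀ i, ((Finset.range (∑ i, q i)).filter (fun c => m c = i)).card ≤ q i := by
  refine ⟨fun c => if h : c < ∑ i, q i then (finSigmaFinEquiv.symm ⟨c, h⟩).1 else i0, ?_, ?_⟩
  · simp
  · intro i
    have hsub : (Finset.range (∑ i, q i)).filter (fun c => (if h : c < ∑ i, q i then
        ((finSigmaFinEquiv (n := q)).symm ⟨c, h⟩).1 else i0) = i) ⊆
        (Finset.univ : Finset (Fin (q i))).image
          (fun j => ((finSigmaFinEquiv (n := q) ⟨i, j⟩ : Fin _) : ℕ)) := by
      intro c hc
      rw [Finset.mem_filter, Finset.mem_range] at hc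
      obtain ⟨h1, h2⟩ := hc
      rw [dif_pos h1] at h2
      rw [Finset.mem_image]
      subst h2
      refine ⟨(finSigmaFinEquiv.symm ⟨c, h1⟩).2, Finset.mem_univ _, ?_⟩
      have : finSigmaFinEquiv (n := q) (finSigmaFinEquiv.symm ⟨c, h1⟩) = ⟨c, h1⟩ :=
        Equiv.apply_symm_apply _ _
      exact congrArg Fin.val this
    refine (Finset.card_le_card hsub).trans (Finset.card_image_le.trans ?_)
    simp

end BK

theorem statement0 {V : Type*} [Fintype V] (H : SimpleGraph V) [DecidableRel H.Adj]
    (hΔ : 6 ≤ H.maxDegree) (hω : H.cliqueNum ≤ H.maxDegree - 1)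
    (k : ℕ) (hk : 1 ≤ k) (p : Fin k → ℕ)
    (hmono : ∀ i j : Fin k, i ≤ j → p j ≤ p i)
    (hp2 : ∀ i, 2 ≤ p i) (hp4 : 4 ≤ p ⟨0, hk⟩)
    (hsum : ∑ i, p i = H.maxDegree - 1 + k) :
    ∃ P : Fin k → Set V,
      (∀ x : V, ∃! i, x ∈ P i) ∧
      ∀ i, H.CliqueFreeOn (P i) (p i) := by
  classical
  have hdeg : ∀ v, (BK.nb H v).card ≤ H.maxDegree := by
    intro v
    refine le_trans (le_of_eq ?_) (H.degree_le_maxDegree v)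
    rw [← SimpleGraph.card_neighborFinset_eq_degree]
    congr 1
    ext x
    rw [BK.mem_nb, SimpleGraph.mem_neighborFinset]
  have hfree : H.CliqueFree H.maxDegree := by
    intro Q hQ
    have := hQ.isClique.card_le_cliqueNum
    rw [hQ.card_eq] at this
    omega
  obtain ⟨f, hf0, hf1, hf2⟩ := BK.main_color H.maxDegree hΔ H hdeg hfree
  set i0 : Fin k := ⟨0, hk⟩ with hi0
  set q : Fin k → ℕ := fun i => if i = i0 then p i - 4 else p i - 1 with hq
  have hqs : ∑ i, q i = H.maxDegree - 4 := by
    have h1 : ∑ i, p i = ∑ i, (q i + (1 + if i = i0 then 3 else 0)) := by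
      apply Finset.sum_congr rfl
      intro i _
      simp only [hq]
      by_cases h : i = i0
      · rw [if_pos h, if_pos h, h]; omega
      · rw [if_neg h, if_neg h]; have := hp2 i; omega
    rw [Finset.sum_add_distrib, Finset.sum_add_distrib, Finset.sum_ite_eq'] at h1
    simp at h1
    omega
  obtain ⟨m, hm0, hm⟩ := BK.exists_distr q i0
  rw [hqs] at hm0 hm
  refine ⟨fun i => {v | m (f v) = i}, fun x => ⟨m (f x), rfl, fun j hj => hj.symm⟩, ?_⟩
  intro i Q hQi hQ
  have hB : (Q.filter (fun v => f v ≠ H.maxDegree - 4)).card ≤ q i := by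
    refine le_trans ?_ (hm i)
    apply Finset.card_le_card_of_injOn f
    · intro v hv
      simp only [Finset.coe_filter, Set.mem_ofPred_eq] at hv
      simp only [Finset.coe_filter, Set.mem_ofPred_eq, Finset.mem_range]
      have := hf0 v
      exact ⟨by omega, hQi hv.1⟩
    · intro u hu v hv huv
      simp only [Finset.coe_filter, Set.mem_ofPred_eq] at hu hv
      by_contra hne
      exact hu.2 (hf1 u v (hQ.isClique hu.1 hv.1 hne) huv)
  have hsplit := Finset.card_filter_add_card_filter_not (s := Q) (fun v => f v = H.maxDegree - 4)
  rw [hQ.card_eq] at hsplit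
  have hB' : (Q.filter (fun v => ¬ f v = H.maxDegree - 4)).card ≤ q i := hB
  by_cases h : i = i0
  · have hqi : q i = p i - 4 := by simp [hq, h]
    have h4 : 4 ≤ p i := by rw [h]; exact hp4
    obtain ⟨T, hT, hTc⟩ := Finset.exists_subset_card_eq
      (show 4 ≤ (Q.filter (fun v => f v = H.maxDegree - 4)).card by omega)
    obtain ⟨x, hx, hx'⟩ := hf2 T ⟨fun a ha b hb hab =>
      hQ.isClique (Finset.mem_filter.1 (hT ha)).1 (Finset.mem_filter.1 (hT hb)).1 hab, hTc⟩
    exact hx' (Finset.mem_filter.1 (hT hx)).2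
  · have hqi : q i = p i - 1 := by simp [hq, h]
    have h2 := hp2 i
    have : (Q.filter (fun v => f v = H.maxDegree - 4)) = ∅ := by
      apply Finset.filter_eq_empty_iff.2
      intro v hv hfv
      have := hQi hv
      simp only [Set.mem_ofPred_eq] at this
      rw [hfv, hm0] at this
      exact h this.symm
    rw [this] at hsplit
    simp at hsplit
    omega
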